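/- arXiv:math/0505563 — 6 statements merged into one kernel-verified Lean document; each statement's English description precedes it below -/
import Mathlib

section
/- (Borsuk–Ulam.) Let n and m be nonnegative integers. If there exists a continuous map φ from the unit sphere S^n ⊂ ℝ^{n+1} to the unit sphere S^m ⊂ ℝ^{m+1} satisfying φ(−x) = −φ(x) for all x ∈ S^n, then n ≤ m. -/
namespace BU

section Cochain
variable {E : Type*}

/-- mod 2 coboundary of a function on lists (augmented). -/
def cobd : List E → (List E → ZMod 2) → ZMod 2
  | [], _ => 0
  | b :: l, g => g l + cobd l (fun t => g (b :: t))

lemma cobd_add (l : List E) : ∀ g h : List E → ZMod 2,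
    cobd l (fun t => g t + h t) = cobd l g + cobd l h := by
  induction l with
  | nil => intro g h; simp [cobd]
  | cons b l ih => intro g h; simp only [cobd, ih]; ring

lemma cobd_cobd (l : List E) : ∀ g : List E → ZMod 2,
    cobd l (fun t => cobd t g) = 0 := by
  induction l with
  | nil => intro g; simp [cobd]
  | cons b l ih =>
    intro g
    simp only [cobd, cobd_add, ih]
    rw [add_zero, CharTwo.add_self_eq_zero]

lemma cobd_congr (l : List E) : ∀ g h : List E → ZMod 2,
    (∀ t, t.Sublist l → t.length + 1 = l.length → g t = h t) → cobd l g = cobd l h := by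
  induction l with
  | nil => intro g h _; simp [cobd]
  | cons b l ih =>
    intro g h H
    simp only [cobd]
    rw [H l (List.sublist_cons_self b l) (by simp), ih]
    intro t ht hl
    exact H _ (ht.cons_cons b) (by simp [hl])

lemma cobd_map {E' : Type*} (f : E → E') (l : List E) : ∀ g : List E' → ZMod 2,
    cobd (l.map f) g = cobd l (fun t => g (t.map f)) := by
  induction l with
  | nil => intro g; simp [cobd]
  | cons b l ih => intro g; simp [cobd, ih]

lemma cobd_perm {l l' : List E} (hp : l.Perm l') : ∀ g : List E → ZMod 2,
    (∀ t t', t.Perm t' → g t = g t') → cobd l g = cobd l' g := by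
  induction hp with
  | nil => intro g _; rfl
  | cons x h ih =>
    intro g hg
    simp only [cobd]
    rw [hg _ _ h, ih]
    intro t t' ht
    exact hg _ _ (ht.cons x)
  | swap x y l =>
    intro g hg
    simp only [cobd]
    have : (fun t => g (y :: x :: t)) = fun t => g (x :: y :: t) :=
      funext fun t => hg _ _ (List.Perm.swap x y t)
    rw [this]; ring
  | trans _ _ ih1 ih2 => intro g hg; rw [ih1 g hg, ih2 g hg]

end Cochain

section Labels
variable {M : ℕ}

/-- alternating test for sorted lists of labels -/
def alt : Bool → List (Fin M ×ₗ Bool) → ZMod 2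
  | _, [] => 1
  | s, b :: l => if (ofLex b).2 = s ∧ ∀ x ∈ l, (ofLex b).1 < (ofLex x).1 then alt (!s) l else 0

def alts (s : Bool) (l : List (Fin M ×ₗ Bool)) : ZMod 2 :=
  alt s (Multiset.sort (l : Multiset (Fin M ×ₗ Bool)) (· ≤ ·))

lemma alts_perm (s : Bool) (t t' : List (Fin M ×ₗ Bool)) (h : t.Perm t') :
    alts s t = alts s t' := by
  unfold alts; rw [Multiset.coe_eq_coe.2 h]

lemma alts_sorted (s : Bool) (t : List (Fin M ×ₗ Bool)) (h : t.Pairwise (· ≤ ·)) :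
    alts s t = alt s t := by
  unfold alts
  congr 1
  rw [Multiset.coe_sort]
  exact List.mergeSort_of_pairwise (by simpa using h)

lemma alt_length (l : List (Fin M ×ₗ Bool)) : ∀ s, alt s l ≠ 0 →
    l.Pairwise (fun x y => (ofLex x).1 < (ofLex y).1) := by
  induction l with
  | nil => intro s _; simp
  | cons b l ih =>
    intro s h
    simp only [alt] at h
    split_ifs at h with h1
    · exact List.pairwise_cons.2 ⟨h1.2, ih _ h⟩
    · exact absurd rfl h

lemma alts_length (s : Bool) (l : List (Fin M ×ₗ Bool)) (h : M < l.length) : alts s l = 0 := by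
  by_contra h0
  have h1 := alt_length _ s h0
  set L := Multiset.sort (l : Multiset (Fin M ×ₗ Bool)) (· ≤ ·) with hL
  have h2 : L.length = l.length := by rw [hL]; simp
  have h3 : (L.map (fun x => (ofLex x).1)).Nodup := by
    rw [List.Nodup, List.pairwise_map]
    exact h1.imp (fun h => ne_of_lt h)
  have := h3.length_le_card
  simp at this
  omega

lemma alt_cons_of (s : Bool) (b : Fin M ×ₗ Bool) (t : List (Fin M ×ₗ Bool))
    (h : ∀ x ∈ t, (ofLex b).1 < (ofLex x).1) :
    alt s (b :: t) = if (ofLex b).2 = s then alt (!s) t else 0 := by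
  rw [alt]
  by_cases hs : (ofLex b).2 = s
  · rw [if_pos ⟨hs, h⟩, if_pos hs]
  · rw [if_neg (fun h => hs h.1), if_neg hs]

lemma alt_cobd (l : List (Fin M ×ₗ Bool)) : ∀ s,
    l.Pairwise (· ≤ ·) → l.Pairwise (fun x y => (ofLex x).1 = (ofLex y).1 → x = y) →
    cobd l (alt s) = alt s l + alt (!s) l := by
  induction l with
  | nil => intro s _ _; simp [cobd, alt]; decide
  | cons b l ih =>
    intro s h1 h2
    rw [List.pairwise_cons] at h1 h2
    by_cases hb : ∀ x ∈ l, (ofLex b).1 < (ofLex x).1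
    · have key : cobd l (fun t => alt s (b :: t)) =
          cobd l (fun t => if (ofLex b).2 = s then alt (!s) t else 0) := by
        apply cobd_congr
        intro t ht _
        exact alt_cons_of s b t (fun x hx => hb x (ht.subset hx))
      simp only [cobd, key]
      by_cases hs : (ofLex b).2 = s
      · simp only [hs, if_true]
        rw [ih _ h1.2 h2.2]
        have hs' : ¬ ((ofLex b).2 = !s) := by rw [hs]; simp
        rw [alt_cons_of s b l hb, alt_cons_of _ b l hb, if_pos hs, if_neg hs', Bool.not_not]
        have := CharTwo.add_self_eq_zero (alt s l)
        linear_combination this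
      · simp only [hs, if_false]
        have hs' : ((ofLex b).2 = !s) := by cases s <;> simp_all
        have h0 : cobd l (fun _ => (0 : ZMod 2)) = 0 := by
          have := cobd_add l (fun _ => 0) (fun _ => 0)
          simpa using this
        rw [h0]
        rw [alt_cons_of s b l hb, alt_cons_of _ b l hb, if_neg hs, if_pos hs', Bool.not_not]
        ring
    · cases l with
      | nil => simp at hb
      | cons c t =>
        have hbc : b = c := by
          apply h2.1 c (by simp)
          push Not at hb
          obtain ⟨x, hx, hle⟩ := hb
          have a1 : (ofLex b).1 ≤ (ofLex c).1 := Prod.Lex.monotone_fst _ _ (h1.1 c (by simp))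
          have a2 : (ofLex c).1 ≤ (ofLex x).1 := by
            rcases List.mem_cons.1 hx with rfl | hx
            · exact le_rfl
            · exact Prod.Lex.monotone_fst _ _ ((List.pairwise_cons.1 h1.2).1 x hx)
          exact le_antisymm a1 (a2.trans hle)
        subst hbc
        have hz : ∀ s t, alt s (b :: b :: t) = 0 := by
          intro s t; simp [alt]
        simp only [cobd, hz]
        have h0 : cobd t (fun _ => (0 : ZMod 2)) = 0 := by
          have := cobd_add t (fun _ => 0) (fun _ => 0)
          simpa using this
        rw [h0, add_zero, CharTwo.add_self_eq_zero, add_zero]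

lemma alts_cobd (s : Bool) (l : List (Fin M ×ₗ Bool))
    (h : ∀ x ∈ l, ∀ y ∈ l, (ofLex x).1 = (ofLex y).1 → x = y) :
    cobd l (alts s) = alts s l + alts (!s) l := by
  set L := Multiset.sort (l : Multiset (Fin M ×ₗ Bool)) (· ≤ ·) with hL
  have hp : L.Perm l := by
    rw [← Multiset.coe_eq_coe, hL, Multiset.sort_eq]
  have hs : L.Pairwise (· ≤ ·) := Multiset.pairwise_sort _ _
  rw [← cobd_perm hp _ (alts_perm s), ← alts_perm s _ _ hp, ← alts_perm (!s) _ _ hp,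
    alts_sorted _ _ hs, alts_sorted _ _ hs, ← alt_cobd _ _ hs]
  · apply cobd_congr
    intro t ht _
    exact alts_sorted _ _ (hs.sublist ht)
  · refine List.pairwise_of_forall_mem_list ?_
    intro x hx y hy
    exact h x (hp.mem_iff.1 hx) y (hp.mem_iff.1 hy)

lemma alt_neg (l : List (Fin M ×ₗ Bool)) : ∀ s,
    alt s (l.map (fun x => toLex ((ofLex x).1, !(ofLex x).2))) = alt (!s) l := by
  induction l with
  | nil => intro s; rfl
  | cons b l ih =>
    intro s
    simp only [List.map_cons, alt, ih]
    have e1 : (ofLex (toLex ((ofLex b).1, !(ofLex b).2))).2 = s ↔ (ofLex b).2 = !s := by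
      cases s <;> simp
    have e2 : (∀ x ∈ l.map (fun x : Fin M ×ₗ Bool => toLex ((ofLex x).1, !(ofLex x).2)),
        (ofLex (toLex ((ofLex b).1, !(ofLex b).2))).1 < (ofLex x).1) ↔
        ∀ x ∈ l, (ofLex b).1 < (ofLex x).1 := by
      rw [List.forall_mem_map]
      simp only [ofLex_toLex]
    simp only [e1, e2]

lemma alts_neg (s : Bool) (l : List (Fin M ×ₗ Bool))
    (h : ∀ x ∈ l, ∀ y ∈ l, (ofLex x).1 = (ofLex y).1 → x = y) :
    alts s (l.map (fun x => toLex ((ofLex x).1, !(ofLex x).2))) = alts (!s) l := by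
  rw [alts, alts, ← alt_neg, Multiset.map_sort (r := (· ≤ ·)) (r' := (· ≤ ·)), Multiset.map_coe]
  intro a ha b hb
  have := h a ha b hb
  rw [Prod.Lex.le_iff, Prod.Lex.le_iff]
  simp only [ofLex_toLex]
  apply or_congr Iff.rfl
  apply and_congr_right
  intro hab
  rw [this hab]
  simp

end Labels

section Subdivision
variable {E : Type*} [NormedAddCommGroup E] [NormedSpace ℝ E]

noncomputable def bary (l : List E) : E := (l.length : ℝ)⁻¹ • l.sum

noncomputable def sdA : ℕ → (List E → ZMod 2) → List E → ZMod 2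
  | 0, g, l => g l
  | n + 1, g, l => cobd l (sdA n (fun t => g (bary l :: t)))

noncomputable def sd (g : List E → ZMod 2) (l : List E) : ZMod 2 := sdA l.length g l

lemma sd_nil (g : List E → ZMod 2) : sd g [] = g [] := rfl

lemma sd_step (g : List E → ZMod 2) (l : List E) (h : l ≠ []) :
    sd g l = cobd l (sd (fun t => g (bary l :: t))) := by
  obtain ⟨n, hn⟩ : ∃ n, l.length = n + 1 :=
    Nat.exists_eq_succ_of_ne_zero (by simpa using h)
  unfold sd
  rw [hn]
  simp only [sdA]
  apply cobd_congr
  intro t _ ht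
  have : t.length = n := by omega
  rw [this]

lemma sd_add_aux (n : ℕ) : ∀ (g h : List E → ZMod 2) (l : List E), l.length = n →
    sd (fun t => g t + h t) l = sd g l + sd h l := by
  induction n with
  | zero => intro g h l hl; rw [List.length_eq_zero_iff.1 hl]; simp [sd_nil]
  | succ n ih =>
    intro g h l hl
    have hne : l ≠ [] := by rintro rfl; simp at hl
    rw [sd_step _ _ hne, sd_step _ _ hne, sd_step _ _ hne, ← cobd_add]
    apply cobd_congr
    intro t _ ht
    exact ih _ _ _ (by omega)

lemma sd_add (g h : List E → ZMod 2) (l : List E) :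
    sd (fun t => g t + h t) l = sd g l + sd h l := sd_add_aux _ _ _ _ rfl

lemma sd_cobd_aux (n : ℕ) : ∀ (g : List E → ZMod 2) (l : List E), l.length = n →
    sd (fun t => cobd t g) l = cobd l (sd g) := by
  induction n with
  | zero => intro g l hl; rw [List.length_eq_zero_iff.1 hl]; simp [sd_nil, cobd]
  | succ n ih =>
    intro g l hl
    have hne : l ≠ [] := by rintro rfl; simp at hl
    rw [sd_step _ _ hne]
    have : cobd l (sd fun t => cobd (bary l :: t) g) =
        cobd l (fun t => sd g t + cobd t (sd fun t => g (bary l :: t))) := by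
      apply cobd_congr
      intro t _ ht
      simp only [cobd]
      rw [sd_add, ih _ _ (by omega)]
    rw [this, cobd_add, cobd_cobd, add_zero]

lemma sd_cobd (g : List E → ZMod 2) (l : List E) :
    sd (fun t => cobd t g) l = cobd l (sd g) := sd_cobd_aux _ _ _ rfl

lemma bary_neg (l : List E) : bary (l.map (fun x => -x)) = - bary l := by
  unfold bary
  have : (l.map (fun x => -x)).sum = - l.sum := by
    induction l with
    | nil => simp
    | cons b l ih => simp [ih, add_comm]
  rw [this]; simp

lemma sd_neg_aux (n : ℕ) : ∀ (g : List E → ZMod 2) (l : List E), l.length = n →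
    sd g (l.map (fun x => -x)) = sd (fun t => g (t.map (fun x => -x))) l := by
  induction n with
  | zero => intro g l hl; rw [List.length_eq_zero_iff.1 hl]; simp [sd_nil]
  | succ n ih =>
    intro g l hl
    have hne : l ≠ [] := by rintro rfl; simp at hl
    rw [sd_step _ _ hne, sd_step _ _ (by simpa using hne), cobd_map]
    apply cobd_congr
    intro t _ ht
    rw [ih _ _ (by omega), bary_neg]
    simp

lemma sd_neg (g : List E → ZMod 2) (l : List E) :
    sd g (l.map (fun x => -x)) = sd (fun t => g (t.map (fun x => -x))) l :=
  sd_neg_aux _ _ _ rfl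

lemma bary_mem {C : Set E} (hC : Convex ℝ C) (l : List E) (hne : l ≠ [])
    (hl : ∀ x ∈ l, x ∈ C) : bary l ∈ C := by
  have h0 : (l.length : ℝ) ≠ 0 := by simpa using hne
  have e : bary l = ∑ i : Fin l.length, (l.length : ℝ)⁻¹ • l[i] := by
    rw [← Finset.smul_sum, bary]
    congr 1
    exact (Fin.sum_univ_getElem l).symm
  rw [e]
  apply hC.sum_mem
  · intro i _; positivity
  · simp [h0]
  · intro i _; exact hl _ (List.getElem_mem _)

lemma norm_sum_sub_le (v : E) (d : ℝ) (t : List E) (h : ∀ w ∈ t, dist w v ≤ d) :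
    ‖t.sum - (t.length : ℝ) • v‖ ≤ t.length * d := by
  induction t with
  | nil => simp
  | cons b t ih =>
    have h1 := h b (by simp)
    have h2 := ih (fun w hw => h w (by simp [hw]))
    rw [dist_eq_norm] at h1
    have e : (b :: t).sum - ((b :: t).length : ℝ) • v
        = (b - v) + (t.sum - (t.length : ℝ) • v) := by
      simp [add_smul]; abel
    rw [e]
    refine (norm_add_le _ _).trans ?_
    simp only [List.length_cons, Nat.cast_add, Nat.cast_one]
    linarith

lemma dist_bary_le (N : ℕ) (d : ℝ) (hd : 0 ≤ d) (l : List E) (hlen : l.length ≤ N + 1)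
    (h : ∀ x ∈ l, ∀ y ∈ l, dist x y ≤ d) (v : E) (hv : v ∈ l) :
    dist v (bary l) ≤ (N / (N + 1) : ℝ) * d := by
  have hk : 0 < l.length := List.length_pos_of_mem hv
  obtain ⟨s, t, rfl⟩ := List.append_of_mem hv
  have hk' : (0 : ℝ) < (s ++ v :: t).length := by exact_mod_cast hk
  have h1 := norm_sum_sub_le v d (s ++ t) (fun w hw => h w (by
    rcases List.mem_append.1 hw with h | h <;> simp [h]) v (by simp))
  set k : ℝ := ((s ++ v :: t).length : ℝ) with hkdef
  have hk1 : (((s ++ t).length : ℕ) : ℝ) = k - 1 := by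
    rw [hkdef]; simp; ring
  have e : bary (s ++ v :: t) - v = k⁻¹ • ((s ++ t).sum - ((s ++ t).length : ℝ) • v) := by
    rw [hk1, bary, ← hkdef]
    have : v = k⁻¹ • (k • v) := by rw [smul_smul, inv_mul_cancel₀ hk'.ne', one_smul]
    nth_rewrite 2 [this]
    rw [← smul_sub]
    congr 1
    simp [sub_smul]; abel
  rw [dist_comm, dist_eq_norm, e, norm_smul, norm_inv, Real.norm_of_nonneg hk'.le]
  rw [hk1] at h1
  have hkN : k ≤ N + 1 := by rw [hkdef]; exact_mod_cast hlen
  rw [hk1]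
  calc k⁻¹ * _ ≤ k⁻¹ * ((k - 1) * d) := by gcongr
    _ = ((k - 1) / k) * d := by ring
    _ ≤ _ := by
      apply mul_le_mul_of_nonneg_right _ hd
      rw [div_le_div_iff₀ hk' (by positivity)]
      nlinarith

lemma sd_congr_aux (N : ℕ) (n : ℕ) : ∀ (g h : List E → ZMod 2) (C : Set E) (d : ℝ) (l : List E),
    l.length = n → n ≤ N + 1 → Convex ℝ C → 0 ≤ d → (∀ x ∈ l, x ∈ C) →
    (∀ x ∈ l, ∀ y ∈ l, dist x y ≤ d) →
    (∀ t : List E, t.length = n → (∀ x ∈ t, x ∈ C) →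
      (∀ x ∈ t, ∀ y ∈ t, dist x y ≤ (N / (N + 1) : ℝ) * d) → g t = h t) →
    sd g l = sd h l := by
  induction n with
  | zero =>
    intro g h C d l hl _ _ _ _ _ H
    rw [List.length_eq_zero_iff.1 hl]
    exact H [] rfl (by simp) (by simp)
  | succ n ih =>
    intro g h C d l hl hN hC hd hlC hld H
    have hne : l ≠ [] := by rintro rfl; simp at hl
    rw [sd_step _ _ hne, sd_step _ _ hne]
    apply cobd_congr
    intro t ht htl
    refine ih _ _ (C ∩ Metric.closedBall (bary l) ((N / (N + 1) : ℝ) * d)) d t (by omega)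
      (by omega) (hC.inter (convex_closedBall _ _)) hd ?_ ?_ ?_
    · intro x hx
      exact ⟨hlC x (ht.subset hx), dist_bary_le N d hd l (by omega) hld x (ht.subset hx)⟩
    · intro x hx y hy
      exact hld x (ht.subset hx) y (ht.subset hy)
    · intro t' ht'l ht'C ht'd
      apply H
      · simp [ht'l]
      · intro x hx
        rcases List.mem_cons.1 hx with rfl | hx
        · exact bary_mem hC l hne hlC
        · exact (ht'C x hx).1
      · intro x hx y hy
        have hnn : 0 ≤ (N / (N + 1) : ℝ) * d := by positivity
        rcases List.mem_cons.1 hx with rfl | hx <;> rcases List.mem_cons.1 hy with rfl | hy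
        · simpa using hnn
        · rw [dist_comm]; exact (ht'C y hy).2
        · exact (ht'C x hx).2
        · exact ht'd x hx y hy

lemma sdr_nil (r : ℕ) (g : List E → ZMod 2) : (sd^[r] g) [] = g [] := by
  induction r generalizing g with
  | zero => rfl
  | succ r ih => rw [Function.iterate_succ_apply, ih, sd_nil]

lemma sdr_add (r : ℕ) (g h : List E → ZMod 2) (l : List E) :
    (sd^[r] (fun t => g t + h t)) l = (sd^[r] g) l + (sd^[r] h) l := by
  induction r generalizing g h with
  | zero => rfl
  | succ r ih =>
    simp only [Function.iterate_succ_apply]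
    rw [← ih]; exact congrFun (congrArg (sd^[r]) (funext fun t => sd_add g h t)) l

lemma sdr_cobd (r : ℕ) (g : List E → ZMod 2) (l : List E) :
    (sd^[r] (fun t => cobd t g)) l = cobd l (sd^[r] g) := by
  induction r generalizing g with
  | zero => rfl
  | succ r ih =>
    simp only [Function.iterate_succ_apply]
    rw [← ih]; exact congrFun (congrArg (sd^[r]) (funext fun t => sd_cobd g t)) l

lemma sdr_neg (r : ℕ) (g : List E → ZMod 2) (l : List E) :
    (sd^[r] g) (l.map (fun x => -x)) = (sd^[r] (fun t => g (t.map (fun x => -x)))) l := by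
  induction r generalizing g with
  | zero => rfl
  | succ r ih =>
    simp only [Function.iterate_succ_apply]
    rw [ih]; exact congrFun (congrArg (sd^[r]) (funext fun t => sd_neg g t)) l

lemma sdr_congr (N : ℕ) (r : ℕ) : ∀ (g h : List E → ZMod 2) (C : Set E) (d : ℝ) (l : List E),
    l.length ≤ N + 1 → Convex ℝ C → 0 ≤ d → (∀ x ∈ l, x ∈ C) →
    (∀ x ∈ l, ∀ y ∈ l, dist x y ≤ d) →
    (∀ t : List E, t.length = l.length → (∀ x ∈ t, x ∈ C) →
      (∀ x ∈ t, ∀ y ∈ t, dist x y ≤ (N / (N + 1) : ℝ) ^ r * d) → g t = h t) →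
    (sd^[r] g) l = (sd^[r] h) l := by
  induction r with
  | zero =>
    intro g h C d l hl hC hd hlC hld H
    exact H l rfl hlC (by simpa using hld)
  | succ r ih =>
    intro g h C d l hl hC hd hlC hld H
    simp only [Function.iterate_succ_apply']
    refine sd_congr_aux N l.length _ _ C d l rfl hl hC hd hlC hld ?_
    intro t htl htC htd
    refine ih g h C _ t (by omega) hC (by positivity) htC htd ?_
    intro t' ht'l ht'C ht'd
    refine H t' (by omega) ht'C ?_
    intro x hx y hy
    refine (ht'd x hx y hy).trans (le_of_eq ?_)
    ring

/-- evaluation on the standard octahedral chains -/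
def oc (e : ℕ → E) : ℕ → (List E → ZMod 2) → ZMod 2
  | 0, g => g [e 0]
  | k + 1, g => oc e k (fun t => g (e (k + 1) :: t)) +
      oc e k (fun t => g (e (k + 1) :: t.map (fun x => -x)))

lemma oc_add (e : ℕ → E) (k : ℕ) : ∀ g h : List E → ZMod 2,
    oc e k (fun t => g t + h t) = oc e k g + oc e k h := by
  induction k with
  | zero => intro g h; rfl
  | succ k ih => intro g h; simp only [oc, ih]; ring

lemma oc_congr (e : ℕ → E) (k : ℕ) : ∀ g h : List E → ZMod 2,
    (∀ l : List E, l.length = k + 1 → (∃ s : ℕ → ℝ, (∀ i, s i = 1 ∨ s i = -1) ∧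
      ∀ v ∈ l, ∃ i ≤ k, v = s i • e i) → g l = h l) → oc e k g = oc e k h := by
  induction k with
  | zero =>
    intro g h H
    refine H _ rfl ⟨fun _ => 1, fun _ => Or.inl rfl, ?_⟩
    intro v hv
    exact ⟨0, le_rfl, by simpa using hv⟩
  | succ k ih =>
    intro g h H
    simp only [oc]
    congr 1
    · apply ih
      rintro l hl ⟨s, hs, hv⟩
      refine H _ (by simp [hl]) ⟨Function.update s (k + 1) 1, ?_, ?_⟩
      · intro i
        by_cases hi : i = k + 1
        · subst hi; simp
        · simpa [hi] using hs i
      · intro v hvm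
        rcases List.mem_cons.1 hvm with rfl | hvm
        · exact ⟨k + 1, le_rfl, by simp⟩
        · obtain ⟨i, hi, rfl⟩ := hv v hvm
          refine ⟨i, by omega, ?_⟩
          rw [Function.update_of_ne (by omega)]
    · apply ih
      rintro l hl ⟨s, hs, hv⟩
      refine H _ (by simp [hl]) ⟨Function.update (fun i => - s i) (k + 1) 1, ?_, ?_⟩
      · intro i
        by_cases hi : i = k + 1
        · subst hi; simp
        · rcases hs i with h | h <;> simp [hi, h]
      · intro v hvm
        rcases List.mem_cons.1 hvm with rfl | hvm
        · exact ⟨k + 1, le_rfl, by simp⟩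
        · obtain ⟨w, hw, rfl⟩ := List.mem_map.1 hvm
          obtain ⟨i, hi, rfl⟩ := hv w hw
          refine ⟨i, by omega, ?_⟩
          rw [Function.update_of_ne (by omega), neg_smul]

lemma map_neg_neg (t : List E) : (t.map (fun x => -x)).map (fun x => -x) = t := by
  simp

lemma oc_cobd_zero (e : ℕ → E) (g : List E → ZMod 2) :
    oc e 0 (fun t => cobd t g) = g [] := by
  simp [oc, cobd]

lemma oc_cobd (e : ℕ → E) (k : ℕ) : ∀ g : List E → ZMod 2,
    oc e (k + 1) (fun t => cobd t g) = oc e k g + oc e k (fun t => g (t.map (fun x => -x))) := by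
  have main : ∀ (k : ℕ) (g : List E → ZMod 2),
      oc e k (fun t => cobd t (fun t => g (e (k + 1) :: t))) +
      oc e k (fun t => cobd t (fun t => g (e (k + 1) :: t.map (fun x => -x)))) = 0 →
      oc e (k + 1) (fun t => cobd t g) =
        oc e k g + oc e k (fun t => g (t.map (fun x => -x))) := by
    intro k g H
    rw [oc]
    simp only [cobd, oc_add, cobd_map]
    linear_combination H
  induction k with
  | zero =>
    intro g
    apply main
    rw [oc_cobd_zero, oc_cobd_zero]
    exact CharTwo.add_self_eq_zero _
  | succ k ih =>
    intro g
    apply main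
    rw [ih, ih]
    simp only [map_neg_neg]
    rw [add_comm (oc e k fun t => g (e (k + 1 + 1) :: List.map (fun x => -x) t))]
    exact CharTwo.add_self_eq_zero _

end Subdivision

section Main

lemma abstract_bu {E : Type*} [NormedAddCommGroup E] [NormedSpace ℝ E] (N M : ℕ)
    (lab : E → Fin M ×ₗ Bool) (e : ℕ → E) (C : (ℕ → ℝ) → Set E)
    (hC : ∀ s, Convex ℝ (C s))
    (he : ∀ s : ℕ → ℝ, (∀ i, s i = 1 ∨ s i = -1) → ∀ i ≤ N, s i • e i ∈ C s)
    (hd : ∀ s : ℕ → ℝ, (∀ i, s i = 1 ∨ s i = -1) → ∀ x ∈ C s, ∀ y ∈ C s, dist x y ≤ 2)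
    (η : ℝ) (hη : 0 < η)
    (hlab : ∀ s : ℕ → ℝ, (∀ i, s i = 1 ∨ s i = -1) → ∀ x ∈ C s, ∀ y ∈ C s, dist x y ≤ η →
      (ofLex (lab x)).1 = (ofLex (lab y)).1 → lab x = lab y)
    (hneg : ∀ s : ℕ → ℝ, (∀ i, s i = 1 ∨ s i = -1) → ∀ x ∈ C s,
      lab (-x) = toLex ((ofLex (lab x)).1, !(ofLex (lab x)).2)) : N + 1 ≤ M := by
  classical
  obtain ⟨r, hr⟩ := exists_pow_lt_of_lt_one (show 0 < η / 2 by positivity)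
    (show (N / (N + 1) : ℝ) < 1 by rw [div_lt_one (by positivity)]; linarith)
  have hr' : (N / (N + 1) : ℝ) ^ r * 2 ≤ η := by linarith
  set a : List E → ZMod 2 := fun l => alts true (l.map lab) with ha
  set u := sd^[r] a with hu
  -- replacing cochains which agree on small simplices
  have rep : ∀ g h : List E → ZMod 2, (∀ s : ℕ → ℝ, (∀ i, s i = 1 ∨ s i = -1) →
      ∀ t : List E, (∀ x ∈ t, x ∈ C s) → (∀ x ∈ t, ∀ y ∈ t, dist x y ≤ η) → g t = h t) →
      ∀ k ≤ N, oc e k (sd^[r] g) = oc e k (sd^[r] h) := by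
    intro g h H k hk
    apply oc_congr
    rintro l hl ⟨s, hs, hv⟩
    have hlC : ∀ x ∈ l, x ∈ C s := by
      intro x hx
      obtain ⟨i, hi, rfl⟩ := hv x hx
      exact he s hs i (by omega)
    refine sdr_congr N r g h (C s) 2 l (by omega) (hC s) (by norm_num) hlC
      (fun x hx y hy => hd s hs x (hlC x hx) y (hlC y hy)) ?_
    intro t _ htC htd
    exact H s hs t htC (fun x hx y hy => (htd x hx y hy).trans hr')
  have step : ∀ k ≤ N, oc e k (fun t => cobd t u) =
      oc e k u + oc e k (fun t => u (t.map (fun x => -x))) := by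
    intro k hk
    have e1 : (fun t => cobd t u) = sd^[r] (fun t => cobd t a) :=
      funext fun t => (sdr_cobd r a t).symm
    have e2 : (fun t => u (t.map (fun x => -x))) = sd^[r] (fun t => a (t.map (fun x => -x))) :=
      funext fun t => sdr_neg r a t
    rw [e1, e2, ← oc_add]
    have e3 : (fun t => u t + (sd^[r] (fun t => a (t.map (fun x => -x)))) t) =
        sd^[r] (fun t => a t + a (t.map (fun x => -x))) :=
      funext fun t => (sdr_add r _ _ t).symm
    rw [e3]
    apply rep _ _ _ k hk
    intro s hs t htC htd
    have hcomp : ∀ x ∈ t.map lab, ∀ y ∈ t.map lab, (ofLex x).1 = (ofLex y).1 → x = y := by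
      intro x' hx' y' hy'
      obtain ⟨x, hx, rfl⟩ := List.mem_map.1 hx'
      obtain ⟨y, hy, rfl⟩ := List.mem_map.1 hy'
      exact hlab s hs x (htC x hx) y (htC y hy) (htd x hx y hy)
    have h1 := alts_cobd true (t.map lab) hcomp
    rw [cobd_map] at h1
    rw [← alts_neg true _ hcomp] at h1
    rw [ha]
    simp only
    rw [h1]
    congr 2
    rw [List.map_map, List.map_map]
    apply List.map_congr_left
    intro x hx
    exact (hneg s hs x (htC x hx)).symm
  have one : ∀ k ≤ N, oc e k u + oc e k (fun t => u (t.map (fun x => -x))) = 1 := by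
    intro k
    induction k with
    | zero =>
      intro hk
      rw [← step 0 hk, oc_cobd_zero, hu, sdr_nil]
      simp [ha, alts, alt]
    | succ k ih =>
      intro hk
      rw [← step _ hk, oc_cobd, ih (by omega)]
  by_contra hM
  push Not at hM
  have hu0 : ∀ l : List E, l.length = N + 1 → u l = 0 := by
    intro l hl
    have z0 : ∀ r : ℕ, ∀ l : List E, l.length = N + 1 → (sd^[r] (fun _ => (0 : ZMod 2))) l = 0 := by
      intro r l _
      have := sdr_add r (fun _ => (0 : ZMod 2)) (fun _ => 0) l
      simpa using this
    rw [← z0 r l hl]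
    refine sdr_congr N r _ _ Set.univ (∑ p ∈ (l ×ˢ l).toFinset, dist p.1 p.2) l (by omega)
      convex_univ (Finset.sum_nonneg fun _ _ => dist_nonneg) (by simp) ?_ ?_
    · intro x hx y hy
      exact Finset.single_le_sum (f := fun p : E × E => dist p.1 p.2)
        (fun _ _ => dist_nonneg) (a := (x, y)) (by simp [hx, hy])
    · intro t ht _ _
      exact alts_length _ _ (by simp; omega)
  have := one N le_rfl
  rw [oc_congr e N u (fun _ => 0) (fun l hl _ => hu0 l hl),
    oc_congr e N (fun t => u (t.map (fun x => -x))) (fun _ => 0)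
      (fun l hl _ => hu0 _ (by simpa using hl)), ← oc_add] at this
  have z : oc e N (fun _ => (0 : ZMod 2)) = 0 := by
    have := oc_add e N (fun _ => 0) (fun _ => 0)
    simpa using this
  simp [z] at this

end Main

end BU

/-- **Borsuk–Ulam theorem**: if there is a continuous antipodal map from the unit
sphere `S^n ⊂ ℝ^{n+1}` to the unit sphere `S^m ⊂ ℝ^{m+1}`, then `n ≤ m`. -/
theorem borsuk_ulam (n m : ℕ)
    (f : EuclideanSpace ℝ (Fin (n + 1)) → EuclideanSpace ℝ (Fin (m + 1)))
    (hcont : ContinuousOn f (Metric.sphere (0 : EuclideanSpace ℝ (Fin (n + 1))) 1))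
    (hmaps : ∀ x ∈ Metric.sphere (0 : EuclideanSpace ℝ (Fin (n + 1))) 1,
      f x ∈ Metric.sphere (0 : EuclideanSpace ℝ (Fin (m + 1))) 1)
    (hanti : ∀ x ∈ Metric.sphere (0 : EuclideanSpace ℝ (Fin (n + 1))) 1,
      f (-x) = - f x) :
    n ≤ m := by
  classical
  let F : EuclideanSpace ℝ (Fin (n + 1)) → EuclideanSpace ℝ (Fin (m + 1)) := fun v => f (‖v‖⁻¹ • v)
  have hsph : ∀ v : EuclideanSpace ℝ (Fin (n + 1)), v ≠ 0 → ‖v‖⁻¹ • v ∈ Metric.sphere (0 : EuclideanSpace ℝ (Fin (n + 1))) 1 := by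
    intro v hv
    rw [mem_sphere_zero_iff_norm, norm_smul, norm_inv, norm_norm,
      inv_mul_cancel₀ (norm_ne_zero_iff.2 hv)]
  let K : Set (EuclideanSpace ℝ (Fin (n + 1))) := Metric.closedBall 0 1 ∩ {v | 1 ≤ ∑ i, |v i|}
  have hK0 : ∀ v ∈ K, v ≠ 0 := by
    rintro v ⟨_, hv⟩ rfl
    simp at hv
    linarith
  have hKc : IsCompact K := by
    apply (isCompact_closedBall (0 : EuclideanSpace ℝ (Fin (n + 1))) 1).inter_right
    apply isClosed_le continuous_const
    exact continuous_finsetSum _ fun i _ => (by fun_prop)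
  have hFc : ContinuousOn F K := by
    apply hcont.comp
    · refine ContinuousOn.smul (f := fun v : EuclideanSpace ℝ (Fin (n + 1)) => ‖v‖⁻¹) (g := fun v => v) ?_ ?_
      · apply ContinuousOn.inv₀ continuous_norm.continuousOn
        intro v hv
        exact norm_ne_zero_iff.2 (hK0 v hv)
      · exact continuousOn_id
    · intro v hv
      exact hsph v (hK0 v hv)
  have hF1 : ∀ v ∈ K, ‖F v‖ = 1 := by
    intro v hv
    exact mem_sphere_zero_iff_norm.1 (hmaps _ (hsph v (hK0 v hv)))
  have hFn : ∀ v ∈ K, F (-v) = - F v := by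
    intro v hv
    have := hanti _ (hsph v (hK0 v hv))
    simp only [F, norm_neg, smul_neg]
    exact this
  -- index of a coordinate of maximal modulus
  have hmax : ∀ w : Fin (m + 1) → ℝ, ∃ j, ∀ i, w i ≤ w j := fun w => Finite.exists_max w
  choose J hJ using hmax
  set δ : ℝ := 1 / (m + 1) with hδ
  have hδ0 : 0 < δ := by positivity
  have hbig : ∀ w : EuclideanSpace ℝ (Fin (m + 1)), ‖w‖ = 1 → δ ≤ |w (J fun i => |w i|)| := by
    intro w hw
    by_contra hlt
    push Not at hlt
    have h1 : ∑ i, (w i) ^ 2 = 1 := by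
      have := EuclideanSpace.real_norm_sq_eq w
      rw [← this, hw]; norm_num
    have hm1 : (0 : ℝ) < m + 1 := by positivity
    have hδ1 : δ ≤ 1 := by
      rw [hδ, div_le_one hm1]; linarith [(Nat.cast_nonneg m : (0 : ℝ) ≤ m)]
    have h2 : ∀ i, (w i) ^ 2 < δ := by
      intro i
      have := hJ (fun i => |w i|) i
      simp only at this
      have h3 : |w i| < δ := this.trans_lt hlt
      rw [← sq_abs]
      nlinarith [abs_nonneg (w i)]
    have h3 : ∑ i, (w i) ^ 2 < ∑ _i : Fin (m + 1), δ :=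
      Finset.sum_lt_sum_of_nonempty Finset.univ_nonempty (fun i _ => h2 i)
    have h4 : ∑ _i : Fin (m + 1), δ = 1 := by
      rw [Finset.sum_const, Finset.card_univ, Fintype.card_fin, nsmul_eq_mul, hδ]
      push_cast
      field_simp
    linarith
  let idx : EuclideanSpace ℝ (Fin (n + 1)) → Fin (m + 1) := fun v => J fun i => |F v i|
  let lab : EuclideanSpace ℝ (Fin (n + 1)) → Fin (m + 1) ×ₗ Bool := fun v => toLex (idx v, decide (0 < F v (idx v)))
  have huc := hKc.uniformContinuousOn_of_continuous hFc
  rw [Metric.uniformContinuousOn_iff] at huc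
  obtain ⟨ε, hε, huc⟩ := huc (2 * δ) (by positivity)
  let e : ℕ → EuclideanSpace ℝ (Fin (n + 1)) := fun i => if h : i < n + 1 then EuclideanSpace.single ⟨i, h⟩ 1 else 0
  let C : (ℕ → ℝ) → Set (EuclideanSpace ℝ (Fin (n + 1))) := fun s =>
    Metric.closedBall 0 1 ∩ {v | ∑ i : Fin (n + 1), s i * v i = 1}
  have hCK : ∀ s : ℕ → ℝ, (∀ i, s i = 1 ∨ s i = -1) → C s ⊆ K := by
    rintro s hs v ⟨hv1, hv2⟩
    refine ⟨hv1, ?_⟩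
    simp only [Set.mem_ofPred_eq] at hv2 ⊢
    rw [← hv2]
    apply Finset.sum_le_sum
    intro i _
    rcases hs i with h | h <;> rw [h]
    · simpa using le_abs_self _
    · simpa using neg_le_abs _
  have := BU.abstract_bu n (m + 1) lab e C ?_ ?_ ?_ (ε / 2) (by positivity) ?_ ?_
  · omega
  · intro s
    apply (convex_closedBall _ _).inter
    intro x hx y hy a b ha hb hab
    simp only [Set.mem_ofPred_eq] at hx hy ⊢
    have : ∑ i : Fin (n + 1), s i * (a • x + b • y) i =
        a * ∑ i : Fin (n + 1), s i * x i + b * ∑ i : Fin (n + 1), s i * y i := by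
      rw [Finset.mul_sum, Finset.mul_sum, ← Finset.sum_add_distrib]
      apply Finset.sum_congr rfl
      intro i _
      simp
      ring
    rw [this, hx, hy]; linarith
  · intro s hs i hi
    have hi' : i < n + 1 := by omega
    have hei : e i = EuclideanSpace.single ⟨i, hi'⟩ 1 := by simp only [e, hi', dif_pos]
    have hs1 : s i * s i = 1 := by rcases hs i with h | h <;> rw [h] <;> norm_num
    have hs2 : |s i| = 1 := by rcases hs i with h | h <;> rw [h] <;> norm_num
    rw [hei]
    refine ⟨?_, ?_⟩
    · rw [mem_closedBall_zero_iff, norm_smul]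
      simp [hs2]
    · simp only [Set.mem_ofPred_eq]
      rw [Finset.sum_eq_single ⟨i, hi'⟩]
      · simpa using hs1
      · intro j _ hj
        simp [hj]
      · simp
  · rintro s hs x ⟨hx, _⟩ y ⟨hy, _⟩
    have := dist_triangle_right x y 0
    rw [Metric.mem_closedBall] at hx hy
    linarith
  · intro s hs x hx y hy hxy hl
    have hx := hCK s hs hx
    have hy := hCK s hs hy
    have hd := huc x hx y hy (by linarith)
    have hl' : idx x = idx y := hl
    have b1 : δ ≤ |F x (idx x)| := hbig _ (hF1 x hx)
    have b2 : δ ≤ |F y (idx y)| := hbig _ (hF1 y hy)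
    have hc : |F x (idx x) - F y (idx x)| < 2 * δ := by
      have := PiLp.norm_apply_le (F x - F y) (idx x)
      rw [← dist_eq_norm] at this
      simpa using this.trans_lt hd
    simp only [lab]
    rw [hl'] at hc b1 ⊢
    have : (0 < F x (idx y)) ↔ (0 < F y (idx y)) := by
      rw [abs_lt] at hc
      constructor
      · intro h
        by_contra h'
        rw [abs_of_pos h] at b1
        rw [abs_of_nonpos (not_lt.1 h')] at b2
        linarith [hc.2]
      · intro h
        by_contra h'
        rw [abs_of_pos h] at b2
        rw [abs_of_nonpos (not_lt.1 h')] at b1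
        linarith [hc.1]
    simp only [this]
  · intro s hs x hx
    have hx := hCK s hs hx
    have hn := hFn x hx
    have hi : idx (-x) = idx x := by
      simp only [idx, hn]
      simp
    have b1 : δ ≤ |F x (idx x)| := hbig _ (hF1 x hx)
    simp only [lab, hi, hn]
    congr 2
    have hne : F x (idx x) ≠ 0 := by
      intro h
      rw [h, abs_zero] at b1
      linarith
    rcases lt_or_gt_of_ne hne with h | h
    · simp [h, h.le]
    · simp [h, h.le]
end

section
/- Let X be a topological space equipped with a continuous involution ν : X → X (ν ∘ ν = id), and let n, m be nonnegative integers. If there exist a continuous map φ : S^n → X with φ(−x) = ν(φ(x)) for all x ∈ S^n, and a continuous map ψ : X → S^m with ψ(ν(y)) = −ψ(y) for all y ∈ X, then n ≤ m. (In the terminology of the paper: Coind X ≤ Ind X, and more generally the coindex of the source bounds the index of the target of any ℤ₂-map.) -/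
open MvPolynomial in
noncomputable def bb {R : Type} [CommRing R] {n : ℕ} (D : ℕ) (g : Fin n → MvPolynomial (Fin n) R)
    (m : Fin n →₀ ℕ) : MvPolynomial (Fin n) R :=
  ∏ i, (g i ^ (m i / D) * X i ^ (m i % D))

open MvPolynomial in
theorem bb_totalDegree {R : Type} [CommRing R] [Nontrivial R] {n : ℕ} (D : ℕ)
    (g : Fin n → MvPolynomial (Fin n) R) (hg : ∀ i, (g i).totalDegree ≤ D)
    (m : Fin n →₀ ℕ) : (bb D g m).totalDegree ≤ m.degree := by
  unfold bb
  rw [Finsupp.degree_eq_sum]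
  refine (totalDegree_finsetProd _ _).trans (Finset.sum_le_sum fun i _ => ?_)
  refine (totalDegree_mul _ _).trans ?_
  have h1 := (totalDegree_pow (g i) (m i / D)).trans (Nat.mul_le_mul_left _ (hg i))
  have h2 : (X i ^ (m i % D) : MvPolynomial (Fin n) R).totalDegree = m i % D := totalDegree_X_pow _ _
  have h3 := Nat.div_add_mod (m i) D
  rw [mul_comm] at h1
  omega

open MvPolynomial in
theorem bb_map {R S : Type} [CommRing R] [CommRing S] {n : ℕ} (D : ℕ) (f : R →+* S)
    (g : Fin n → MvPolynomial (Fin n) R) (m : Fin n →₀ ℕ) :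
    map f (bb D g m) = bb D (fun i => map f (g i)) m := by
  simp [bb, map_prod]

open MvPolynomial in
theorem bb_X {R : Type} [CommRing R] {n : ℕ} (D : ℕ) (m : Fin n →₀ ℕ) :
    bb D (fun i => (X i ^ D : MvPolynomial (Fin n) R)) m = monomial m 1 := by
  unfold bb
  rw [monomial_eq, Finsupp.prod_fintype _ _ (by simp)]
  simp only [map_one, one_mul, ← pow_mul, ← pow_add, Nat.div_add_mod]

open MvPolynomial in
theorem bb_mul {R : Type} [CommRing R] {n : ℕ} (D : ℕ) (hD : 0 < D)
    (g : Fin n → MvPolynomial (Fin n) R) (m : Fin n →₀ ℕ) (i : Fin n) :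
    g i * bb D g m = bb D g (m + Finsupp.single i D) := by
  unfold bb
  rw [← Finset.mul_prod_erase _ _ (Finset.mem_univ i),
    ← Finset.mul_prod_erase Finset.univ (fun j => g j ^ ((m + Finsupp.single i D) j / D) * 
      X j ^ ((m + Finsupp.single i D) j % D)) (Finset.mem_univ i), ← mul_assoc]
  congr 1
  · simp [Nat.add_div_right _ hD, pow_succ]
    ring
  · refine Finset.prod_congr rfl fun j hj => ?_
    have : j ≠ i := Finset.ne_of_mem_erase hj
    simp [this]

noncomputable instance degFintype (n k : ℕ) : Fintype {m : Fin n →₀ ℕ // m.degree ≤ k} :=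
  (Finsupp.finite_of_degree_le k).fintype

noncomputable def bbMat {R : Type} [CommRing R] {n : ℕ} (D : ℕ)
    (g : Fin n → MvPolynomial (Fin n) R) (k : ℕ) :
    Matrix {m : Fin n →₀ ℕ // m.degree ≤ k} {m : Fin n →₀ ℕ // m.degree ≤ k} R :=
  Matrix.of fun a b => (bb D g a.1).coeff b.1

open MvPolynomial in
theorem bb_li {n : ℕ} (D : ℕ)
    (g : Fin n → MvPolynomial (Fin n) ℝ) 
    (hdet : ∀ k, (bbMat D g k).det ≠ 0) : LinearIndependent ℝ (bb D g) := by
  rw [linearIndependent_iff']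
  intro s c hs i hi
  classical
  set k := s.sup Finsupp.degree
  have hk : ∀ m ∈ s, m.degree ≤ k := fun m hm => Finset.le_sup (f := Finsupp.degree) hm
  let v : {m : Fin n →₀ ℕ // m.degree ≤ k} → ℝ := fun m => if m.1 ∈ s then c m.1 else 0
  have hv : Matrix.vecMul v (bbMat D g k) = 0 := by
    ext b
    have := congrArg (coeff b.1) hs
    rw [coeff_sum] at this
    simp only [coeff_smul, coeff_zero, smul_eq_mul] at this
    rw [Pi.zero_apply, ← this]
    simp only [Matrix.vecMul, dotProduct, bbMat, Matrix.of_apply, v, ite_mul, zero_mul]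
    rw [← Finset.sum_filter]
    refine Finset.sum_bij (fun a _ => a.1) ?_ ?_ ?_ ?_
    · intro a ha; simpa using ha
    · intro a _ b _ h; exact Subtype.ext h
    · intro b hb; exact ⟨⟨b, hk b hb⟩, by simpa using hb, rfl⟩
    · intros; rfl
  have h0 := Matrix.eq_zero_of_vecMul_eq_zero (hdet k) hv
  have := congrFun h0 ⟨i, hk i hi⟩
  simpa [v, hi] using this

open MvPolynomial in
theorem bb_span {n : ℕ} (D : ℕ)
    (g : Fin n → MvPolynomial (Fin n) ℝ) (hg : ∀ i, (g i).totalDegree ≤ D)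
    (hdet : ∀ k, (bbMat D g k).det ≠ 0) : ⊤ ≤ Submodule.span ℝ (Set.range (bb D g)) := by
  classical
  intro p _
  set k := p.totalDegree with hk
  have hu : IsUnit (bbMat D g k) := by
    rw [Matrix.isUnit_iff_isUnit_det]; exact (hdet k).isUnit
  obtain ⟨w, hw⟩ := (Matrix.vecMul_surjective_iff_isUnit.mpr hu) (fun m => p.coeff m.1)
  have : p = ∑ m, w m • bb D g m.1 := by
    ext b
    rw [coeff_sum]
    by_cases hb : b.degree ≤ k
    · have := congrFun hw ⟨b, hb⟩
      simp only [Matrix.vecMul, dotProduct, bbMat, Matrix.of_apply] at this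
      simp [← this]
    · rw [coeff_eq_zero_of_totalDegree_lt (by rw [← hk]; push Not at hb; exact hb)]
      symm
      refine Finset.sum_eq_zero fun m _ => ?_
      rw [coeff_smul, coeff_eq_zero_of_totalDegree_lt, smul_zero]
      refine lt_of_le_of_lt ((bb_totalDegree D g hg m.1).trans m.2) ?_
      push Not at hb; exact hb
  rw [this]
  exact Submodule.sum_mem _ fun m _ => Submodule.smul_mem _ _ (Submodule.subset_span ⟨_, rfl⟩)


theorem exists_real_point (k : ℕ) : ∀ (B : Type) [CommRing B] [Algebra ℝ B] [Module.Finite ℝ B],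
    Module.finrank ℝ B = k → Odd k → Nonempty (B →ₐ[ℝ] ℝ) := by
  induction k using Nat.strong_induction_on with
  | _ k ih =>
  intro B _ _ _ hk hodd
  have hnt : Nontrivial B := by
    apply Module.nontrivial_of_finrank_pos (R := ℝ)
    rw [hk]; exact hodd.pos
  by_cases hdom : IsDomain B
  · have hf : IsField B := by
      haveI : Algebra.IsIntegral ℝ B := inferInstance
      exact isField_of_isIntegral_of_isField' (R := ℝ) (Field.toIsField ℝ)
    letI := hf.toField
    haveI : Algebra.IsAlgebraic ℝ B := inferInstance
    rcases Real.nonempty_algEquiv_or B with h | h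
    · exact ⟨h.some.toAlgHom⟩
    · have := h.some.toLinearEquiv.finrank_eq
      rw [Complex.finrank_real_complex] at this
      rw [this] at hk
      subst hk
      exact absurd hodd (by decide)
  · have : ∃ x y : B, x ≠ 0 ∧ y ≠ 0 ∧ x * y = 0 := by
      by_contra hcon
      push Not at hcon
      apply hdom
      haveI : NoZeroDivisors B := ⟨fun {a b} h => by
        by_contra h'
        push Not at h'
        exact hcon a b h'.1 h'.2 h⟩
      exact NoZeroDivisors.to_isDomain B
    obtain ⟨x, y, hx, hy, hxy⟩ := this
    let f : B →ₗ[B] B := LinearMap.mulLeft B x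
    let fR : B →ₗ[ℝ] B := LinearMap.mulLeft ℝ x
    let I : Ideal B := LinearMap.range f
    let J : Ideal B := LinearMap.ker f
    have h1 := LinearMap.finrank_range_add_finrank_ker fR
    have hI : Module.finrank ℝ (B ⧸ I) + Module.finrank ℝ I = Module.finrank ℝ B :=
      Submodule.finrank_quotient_add_finrank (I.restrictScalars ℝ)
    have hJ : Module.finrank ℝ (B ⧸ J) + Module.finrank ℝ J = Module.finrank ℝ B :=
      Submodule.finrank_quotient_add_finrank (J.restrictScalars ℝ)
    have e1 : Module.finrank ℝ I = Module.finrank ℝ (LinearMap.range fR) := rfl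
    have e2 : Module.finrank ℝ J = Module.finrank ℝ (LinearMap.ker fR) := rfl
    have p1 : 0 < Module.finrank ℝ I := by
      haveI : Nontrivial I := ⟨⟨⟨x, ⟨1, by simp [f]⟩⟩, 0, fun h => hx (by simpa using congrArg Subtype.val h)⟩⟩
      exact Module.finrank_pos
    have p2 : 0 < Module.finrank ℝ J := by
      haveI : Nontrivial J := ⟨⟨⟨y, by simp [J, f, hxy]⟩, 0, fun h => hy (by simpa using congrArg Subtype.val h)⟩⟩
      exact Module.finrank_pos
    have hor : Odd (Module.finrank ℝ (B ⧸ I)) ∨ Odd (Module.finrank ℝ (B ⧸ J)) := by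
      rw [← Nat.not_even_iff_odd, ← Nat.not_even_iff_odd, ← not_and_or]
      rintro ⟨⟨a, ha⟩, ⟨b, hb⟩⟩
      obtain ⟨c, hc⟩ := hodd
      omega
    rcases hor with h | h
    · obtain ⟨g⟩ := ih _ (by omega) (B ⧸ I) rfl h
      exact ⟨g.comp (Ideal.Quotient.mkₐ ℝ I)⟩
    · obtain ⟨g⟩ := ih _ (by omega) (B ⧸ J) rfl h
      exact ⟨g.comp (Ideal.Quotient.mkₐ ℝ J)⟩

open MvPolynomial in
theorem exists_zero {n : ℕ} (D : ℕ) (hD : Odd D)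
    (g : Fin n → MvPolynomial (Fin n) ℝ) (hg : ∀ i, (g i).totalDegree ≤ D)
    (hdet : ∀ k, (bbMat D g k).det ≠ 0) : ∃ y : Fin n → ℝ, ∀ i, eval y (g i) = 0 := by
  classical
  have hD0 : 0 < D := hD.pos
  let b := Module.Basis.mk (bb_li D g hdet) (bb_span D g hg hdet)
  have hb : ∀ m, b m = bb D g m := fun m => Module.Basis.mk_apply _ _ _
  let ι : (Fin n → Fin D) → (Fin n →₀ ℕ) := fun a => Finsupp.equivFunOnFinite.symm (fun i => (a i : ℕ))
  have hι : Function.Injective ι := by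
    intro a a' h
    funext i
    have := DFunLike.congr_fun h i
    exact Fin.ext this
  let π : MvPolynomial (Fin n) ℝ →ₗ[ℝ] ((Fin n → Fin D) → ℝ) :=
    LinearMap.pi fun a => b.coord (ι a)
  have hπ : ∀ p a, π p a = b.repr p (ι a) := fun p a => rfl
  have hsurj : Function.Surjective π := by
    intro v
    refine ⟨∑ a, v a • b (ι a), ?_⟩
    ext a
    rw [hπ]
    simp [map_sum, Finsupp.single_apply, hι.eq_iff]
  let I : Ideal (MvPolynomial (Fin n) ℝ) := Ideal.span (Set.range g)
  have hker : LinearMap.ker π = I.restrictScalars ℝ := by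
    apply le_antisymm
    · intro p hp
      rw [LinearMap.mem_ker] at hp
      change p ∈ I
      rw [← b.linearCombination_repr p, Finsupp.linearCombination_apply]
      refine Ideal.sum_mem _ fun m hm => ?_
      have : ∃ i, D ≤ m i := by
        by_contra hcon
        push Not at hcon
        have : ι (fun i => ⟨m i, hcon i⟩) = m := by ext i; rfl
        have h2 := congrFun hp (fun i => ⟨m i, hcon i⟩)
        rw [hπ, this] at h2
        exact (Finsupp.mem_support_iff.mp hm) h2
      obtain ⟨i, hi⟩ := this
      have h3 : m = (m - Finsupp.single i D) + Finsupp.single i D := by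
        rw [tsub_add_cancel_of_le]
        exact Finsupp.single_le_iff.mpr hi
      change b.repr p m • b m ∈ I
      have h4 : b m = g i * bb D g (m - Finsupp.single i D) := by
        rw [hb, bb_mul D hD0, ← h3]
      rw [h4]
      rw [MvPolynomial.smul_eq_C_mul]
      exact I.mul_mem_left _ (I.mul_mem_right _ (Ideal.subset_span ⟨i, rfl⟩))
    · intro p hp
      change p ∈ I at hp
      obtain ⟨c, rfl⟩ := Ideal.mem_span_range_iff_exists_fun.mp hp
      refine Submodule.sum_mem _ fun i _ => ?_
      have hz : π.comp (LinearMap.mulLeft ℝ (g i)) = 0 := by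
        refine b.ext fun m => ?_
        rw [LinearMap.comp_apply, LinearMap.mulLeft_apply, hb, bb_mul D hD0, ← hb]
        ext a
        rw [hπ, Module.Basis.repr_self, Finsupp.single_apply, if_neg]
        · rfl
        · intro h
          have h1 := DFunLike.congr_fun h i
          have h2 : ι a i = a i := rfl
          have h3 := (a i).2
          simp at h1
          omega
      rw [LinearMap.mem_ker, mul_comm]
      exact LinearMap.congr_fun hz (c i)
  let e : (MvPolynomial (Fin n) ℝ ⧸ I) ≃ₗ[ℝ] ((Fin n → Fin D) → ℝ) :=
    (Submodule.quotEquivOfEq _ _ hker.symm : (MvPolynomial (Fin n) ℝ ⧸ I.restrictScalars ℝ) ≃ₗ[ℝ] _) ≪≫ₗ π.quotKerEquivOfSurjective hsurj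
  have hfin : Module.Finite ℝ (MvPolynomial (Fin n) ℝ ⧸ I) := Module.Finite.equiv e.symm
  have hrank : Module.finrank ℝ (MvPolynomial (Fin n) ℝ ⧸ I) = D ^ n := by
    rw [e.finrank_eq]; simp
  obtain ⟨h⟩ := exists_real_point _ (MvPolynomial (Fin n) ℝ ⧸ I) hrank hD.pow
  let h' := h.comp (Ideal.Quotient.mkₐ ℝ I)
  refine ⟨fun i => h' (X i), fun i => ?_⟩
  have : h' (g i) = 0 := by
    simp only [h', AlgHom.comp_apply]
    rw [Ideal.Quotient.mkₐ_eq_mk, Ideal.Quotient.eq_zero_iff_mem.mpr (Ideal.subset_span (Set.mem_range_self i)), map_zero]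
  rw [← this, ← MvPolynomial.coe_aeval_eq_eval]
  change aeval _ (g i) = _
  exact DFunLike.congr_fun (MvPolynomial.aeval_unique h').symm (g i)

open MvPolynomial in
theorem exists_zero_generic {n : ℕ} (D : ℕ) (hD : Odd D)
    (P : Fin n → MvPolynomial (Fin n) ℝ) (hP : ∀ i, (P i).totalDegree ≤ D) (S : ℝ) :
    ∃ s > S, ∃ y : Fin n → ℝ, ∀ i, y i ^ D + s * eval y (P i) = 0 := by
  classical
  let G : Fin n → MvPolynomial (Fin n) (Polynomial ℝ) := fun i =>
    X i ^ D + C Polynomial.X * map Polynomial.C (P i)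
  let g : ℝ → Fin n → MvPolynomial (Fin n) ℝ := fun s i => X i ^ D + C s * P i
  have hGg : ∀ s i, map (Polynomial.evalRingHom s) (G i) = g s i := by
    intro s i
    have : (Polynomial.evalRingHom s).comp Polynomial.C = RingHom.id ℝ := by
      ext; simp
    simp only [G, g, map_add, map_mul, map_pow, map_X, map_C, map_map, this, map_id]
    simp
  have hdetG : ∀ s k, Polynomial.eval s (bbMat D G k).det = (bbMat D (g s) k).det := by
    intro s k
    rw [← Polynomial.coe_evalRingHom, RingHom.map_det]
    congr 1
    ext a b
    simp only [bbMat, RingHom.mapMatrix_apply, Matrix.map_apply, Matrix.of_apply]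
    rw [← coeff_map, bb_map]
    simp only [hGg]
  have hne : ∀ k, (bbMat D G k).det ≠ 0 := by
    intro k h
    have h0 := hdetG 0 k
    rw [h] at h0
    have : bbMat D (g 0) k = 1 := by
      ext a b
      have hg0 : g 0 = fun i => X i ^ D := by funext i; simp [g]
      simp only [bbMat, hg0, bb_X, Matrix.of_apply, coeff_monomial, Matrix.one_apply, Subtype.ext_iff]
    rw [this] at h0
    simp at h0
  have hc : (⋃ k, {s : ℝ | (bbMat D (g s) k).det = 0}).Countable := by
    refine Set.countable_iUnion fun k => ?_
    refine Set.Finite.countable ?_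
    refine ((bbMat D G k).det.roots.toFinset.finite_toSet).subset ?_
    intro s hs
    simp only [Finset.mem_coe, Multiset.mem_toFinset, Polynomial.mem_roots (hne k), Polynomial.IsRoot]
    rw [hdetG]; exact hs
  have hd := hc.dense_compl ℝ
  obtain ⟨s, hs1, hs2⟩ := hd.exists_mem_open isOpen_Ioi (⟨S + 1, by simp⟩ : (Set.Ioi S).Nonempty)
  refine ⟨s, hs2, ?_⟩
  have hdeg : ∀ i, (g s i).totalDegree ≤ D := by
    intro i
    refine (totalDegree_add _ _).trans (max_le ?_ ?_)
    · rw [totalDegree_X_pow]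
    · refine (totalDegree_mul _ _).trans ?_
      simpa using hP i
  obtain ⟨y, hy⟩ := exists_zero D hD (g s) hdeg (by
    intro k hk
    exact hs1 (Set.mem_iUnion.mpr ⟨k, hk⟩))
  exact ⟨y, fun i => by simpa [g] using hy i⟩

open MvPolynomial in
theorem hom_eval_scale {k m : ℕ} (p : MvPolynomial (Fin k) ℝ) (hp : p.IsHomogeneous m) (c : ℝ)
    (x : Fin k → ℝ) : eval (fun i => c * x i) p = c ^ m * eval x p := by
  rw [eval_eq', eval_eq', Finset.mul_sum]
  refine Finset.sum_congr rfl fun d hd => ?_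
  have h : d.degree = m := by
    have := hp (mem_support_iff.mp hd)
    rw [Finsupp.degree_eq_weight_one]
    exact this
  rw [Finsupp.degree_eq_sum] at h
  simp only [mul_pow, Finset.prod_mul_distrib, Finset.prod_pow_eq_pow_sum, h]
  ring

open MvPolynomial in
theorem dehom_degree {n : ℕ} (p : MvPolynomial (Fin (n + 1)) ℝ) (D : ℕ) (hp : p.totalDegree ≤ D) :
    (aeval (Fin.cons 1 X : Fin (n + 1) → MvPolynomial (Fin n) ℝ) p).totalDegree ≤ D := by
  rw [aeval_def, eval₂_eq']
  refine totalDegree_finsetSum_le fun d hd => ?_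
  refine le_trans ?_ ((le_totalDegree hd).trans hp)
  refine (totalDegree_mul _ _).trans ?_
  rw [algebraMap_eq, totalDegree_C, zero_add]
  rw [Finsupp.sum_fintype _ _ (by simp)]
  refine (totalDegree_finsetProd _ _).trans (Finset.sum_le_sum fun i _ => ?_)
  refine (totalDegree_pow _ _).trans ?_
  refine (Nat.mul_le_mul_left _ (?_ : _ ≤ 1)).trans (by simp)
  refine Fin.cases ?_ (fun j => ?_) i
  · simp
  · simp

open MvPolynomial in
theorem poly_approx {k : ℕ} (f : EuclideanSpace ℝ (Fin k) → ℝ)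
    (hf : ContinuousOn f (Metric.sphere 0 1)) (ε : ℝ) (hε : 0 < ε) :
    ∃ p : MvPolynomial (Fin k) ℝ, ∀ x ∈ Metric.sphere (0 : EuclideanSpace ℝ (Fin k)) 1,
      |eval (fun i => x i) p - f x| < ε := by
  let K := Metric.sphere (0 : EuclideanSpace ℝ (Fin k)) 1
  let c : Fin k → C(K, ℝ) := fun i => ⟨fun x => x.1 i, by fun_prop⟩
  let A : Subalgebra ℝ C(K, ℝ) := (aeval c : MvPolynomial (Fin k) ℝ →ₐ[ℝ] C(K, ℝ)).range
  have hA : A.SeparatesPoints := by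
    intro x y hxy
    have : ∃ i, x.1 i ≠ y.1 i := by
      by_contra hcon
      push Not at hcon
      exact hxy (Subtype.ext (PiLp.ext hcon))
    obtain ⟨i, hi⟩ := this
    exact ⟨c i, ⟨c i, ⟨X i, by simp⟩, rfl⟩, hi⟩
  have : CompactSpace K := isCompact_iff_compactSpace.mp (isCompact_sphere _ _)
  obtain ⟨⟨g, p, hp⟩, hg⟩ := ContinuousMap.exists_mem_subalgebra_near_continuous_of_separatesPoints A hA
    (fun x : K => f x.1) (continuousOn_iff_continuous_domRestrict.mp hf) ε hε
  refine ⟨p, fun x hx => ?_⟩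
  have h1 := hg ⟨x, hx⟩
  rw [Real.norm_eq_abs] at h1
  convert h1 using 3
  change _ = g ⟨x, hx⟩
  rw [← hp]
  let ev : C(K, ℝ) →ₐ[ℝ] ℝ := ContinuousMap.evalAlgHom ℝ ℝ ⟨x, hx⟩
  change _ = ev (aeval c p)
  rw [← AlgHom.comp_apply, comp_aeval, ← coe_aeval_eq_eval]
  rfl

open MvPolynomial in
/-- homogenised odd part -/
noncomputable def oddHom {k : ℕ} (D : ℕ) (p : MvPolynomial (Fin k) ℝ) : MvPolynomial (Fin k) ℝ :=
  ∑ j ∈ (Finset.range (D + 1)).filter Odd,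
    homogeneousComponent j p * (∑ i, X i ^ 2) ^ ((D - j) / 2)

open MvPolynomial in
theorem oddHom_hom {k : ℕ} (D : ℕ) (hD : Odd D) (p : MvPolynomial (Fin k) ℝ) :
    (oddHom D p).IsHomogeneous D := by
  refine IsHomogeneous.sum _ _ _ fun j hj => ?_
  rw [Finset.mem_filter, Finset.mem_range] at hj
  have h1 : (∑ i, X i ^ 2 : MvPolynomial (Fin k) ℝ).IsHomogeneous 2 :=
    IsHomogeneous.sum _ _ _ fun i _ => isHomogeneous_X_pow i 2
  have h2 := (homogeneousComponent_isHomogeneous j p).mul (h1.pow ((D - j) / 2))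
  have h3 : j + 2 * ((D - j) / 2) = D := by
    obtain ⟨a, ha⟩ := hD
    obtain ⟨b, hb⟩ := hj.2
    omega
  rwa [h3] at h2

open MvPolynomial in
theorem oddHom_eval {k : ℕ} (D : ℕ) (p : MvPolynomial (Fin k) ℝ) (hp : p.totalDegree ≤ D)
    (x : Fin k → ℝ) (hx : ∑ i, x i ^ 2 = 1) :
    eval x (oddHom D p) = (eval x p - eval (fun i => - x i) p) / 2 := by
  have hsum : p = ∑ j ∈ Finset.range (D + 1), homogeneousComponent j p := by
    conv_lhs => rw [← sum_homogeneousComponent p]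
    refine Finset.sum_subset (Finset.range_mono (by omega)) fun j _ hj => ?_
    rw [Finset.mem_range] at hj
    exact homogeneousComponent_eq_zero j p (by omega)
  have hneg : eval (fun i => - x i) p
      = ∑ j ∈ Finset.range (D + 1), (-1) ^ j * eval x (homogeneousComponent j p) := by
    conv_lhs => rw [hsum]
    rw [map_sum]
    refine Finset.sum_congr rfl fun j _ => ?_
    rw [← hom_eval_scale _ (homogeneousComponent_isHomogeneous j p)]
    simp
  have hpos : eval x p = ∑ j ∈ Finset.range (D + 1), eval x (homogeneousComponent j p) := by
    conv_lhs => rw [hsum]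
    rw [map_sum]
  rw [hneg, hpos, ← Finset.sum_sub_distrib, Finset.sum_div, oddHom, map_sum, Finset.sum_filter]
  refine Finset.sum_congr rfl fun j _ => ?_
  split_ifs with h
  · simp [hx, h.neg_one_pow]
  · rw [Nat.not_odd_iff_even] at h
    simp [h.neg_one_pow]

open MvPolynomial in
theorem bu {n : ℕ} (f : EuclideanSpace ℝ (Fin (n + 1)) → Fin n → ℝ)
    (hf : ∀ i, ContinuousOn (fun x => f x i) (Metric.sphere 0 1))
    (hodd : ∀ x ∈ Metric.sphere (0 : EuclideanSpace ℝ (Fin (n + 1))) 1, ∀ i, f (-x) i = - f x i)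
    (ε : ℝ) (hε : 0 < ε) :
    ∃ x ∈ Metric.sphere (0 : EuclideanSpace ℝ (Fin (n + 1))) 1, ∀ i, |f x i| ≤ ε := by
  choose p hp using fun i => poly_approx (fun x => f x i) (hf i) (ε / 2) (by positivity)
  set D := 2 * (Finset.univ.sup fun i => (p i).totalDegree) + 1 with hDdef
  have hD : Odd D := ⟨_, rfl⟩
  have hpD : ∀ i, (p i).totalDegree ≤ D := fun i => by
    have := Finset.le_sup (f := fun i => (p i).totalDegree) (Finset.mem_univ i)
    omega
  obtain ⟨s, hs, y, hy⟩ := exists_zero_generic D hD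
    (fun i => aeval (Fin.cons 1 X : Fin (n + 1) → MvPolynomial (Fin n) ℝ) (oddHom D (p i)))
    (fun i => dehom_degree _ D (oddHom_hom D hD (p i)).totalDegree_le) (2 / ε)
  have hs0 : 0 < s := lt_trans (by positivity) hs
  set z : Fin (n + 1) → ℝ := Fin.cons 1 y with hz
  have hyz : ∀ i, y i ^ D + s * eval z (oddHom D (p i)) = 0 := by
    intro i
    rw [← hy i]
    congr 2
    have : ((aeval y : MvPolynomial (Fin n) ℝ →ₐ[ℝ] ℝ).comp
        (aeval (Fin.cons 1 X : Fin (n + 1) → MvPolynomial (Fin n) ℝ))) = aeval z := by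
      rw [comp_aeval]
      congr 1
      funext j
      refine Fin.cases ?_ (fun j => ?_) j <;> simp [hz]
    have h2 := AlgHom.congr_fun this (oddHom D (p i))
    rw [← coe_aeval_eq_eval, ← coe_aeval_eq_eval]
    exact h2.symm
  have hsq : 0 < ∑ j, z j ^ 2 := by
    rw [Fin.sum_univ_succ]
    have : 0 ≤ ∑ i : Fin n, z i.succ ^ 2 := Finset.sum_nonneg fun i _ => sq_nonneg _
    have h0 : z 0 = 1 := by simp [hz]
    rw [h0]
    linarith
  set r := Real.sqrt (∑ j, z j ^ 2) with hr
  have hr0 : 0 < r := Real.sqrt_pos.mpr hsq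
  have hr2 : r ^ 2 = ∑ j, z j ^ 2 := Real.sq_sqrt hsq.le
  set x : EuclideanSpace ℝ (Fin (n + 1)) := WithLp.toLp 2 (fun j => r⁻¹ * z j) with hx
  have hxj : ∀ j, x j = r⁻¹ * z j := fun j => rfl
  have hx1 : ∑ j, x j ^ 2 = 1 := by
    simp only [hxj, mul_pow, ← Finset.mul_sum, ← hr2]
    field_simp
  have hxs : x ∈ Metric.sphere (0 : EuclideanSpace ℝ (Fin (n + 1))) 1 := by
    rw [mem_sphere_zero_iff_norm, EuclideanSpace.norm_eq]
    simp [hx1]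
  refine ⟨x, hxs, fun i => ?_⟩
  have hnx : -x ∈ Metric.sphere (0 : EuclideanSpace ℝ (Fin (n + 1))) 1 := by simpa using hxs
  have e1 := oddHom_eval D (p i) (hpD i) (fun j => x j) hx1
  have a1 := hp i x hxs
  have a2 := hp i (-x) hnx
  simp only [PiLp.neg_apply] at a2
  rw [hodd x hxs i] at a2
  have e2 : eval (fun j => x j) (oddHom D (p i)) = (r⁻¹) ^ D * eval z (oddHom D (p i)) :=
    hom_eval_scale _ (oddHom_hom D hD (p i)) _ _
  have e3 : s * eval (fun j => x j) (oddHom D (p i)) = - (x i.succ) ^ D := by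
    have h5 : z i.succ = y i := by simp [hz]
    rw [e2, hxj, mul_pow, h5]
    linear_combination (r⁻¹) ^ D * hyz i
  have hxi : |x i.succ| ≤ 1 := by
    rw [← sq_le_one_iff_abs_le_one, ← hx1]
    exact Finset.single_le_sum (f := fun j => x j ^ 2) (fun j _ => sq_nonneg _) (Finset.mem_univ _)
  have h6 : s * |eval (fun j => x j) (oddHom D (p i))| ≤ 1 := by
    have h9 : s * |eval (fun j => x j) (oddHom D (p i))| = |s * eval (fun j => x j) (oddHom D (p i))| := by
      rw [abs_mul, abs_of_pos hs0]
    rw [h9, e3, abs_neg, abs_pow]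
    exact pow_le_one₀ (abs_nonneg _) hxi
  have h7 : |eval (fun j => x j) (oddHom D (p i))| ≤ ε / 2 := by
    have h8 : 2 < s * ε := by rwa [gt_iff_lt, div_lt_iff₀ hε] at hs
    by_contra hcon
    push Not at hcon
    nlinarith
  rw [e1] at h7
  rw [abs_le] at h7 ⊢
  rw [abs_lt] at a1 a2
  constructor <;> linarith [h7.1, h7.2, a1.1, a1.2, a2.1, a2.2]

/-- **Coindex ≤ Index**: let `X` be a space with a continuous involution `ν`. If there
is a continuous ℤ₂-map `φ : S^n → X` (i.e. `φ(-x) = ν(φ(x))`) and a continuous ℤ₂-map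
`ψ : X → S^m` (i.e. `ψ(ν(y)) = -ψ(y)`), then `n ≤ m`. -/
theorem coindex_le_index {X : Type} [TopologicalSpace X]
    (ν : X → X) (hν : Continuous ν) (hinv : ∀ x, ν (ν x) = x) (n m : ℕ)
    (φ : EuclideanSpace ℝ (Fin (n + 1)) → X)
    (hφcont : ContinuousOn φ (Metric.sphere (0 : EuclideanSpace ℝ (Fin (n + 1))) 1))
    (hφ : ∀ x ∈ Metric.sphere (0 : EuclideanSpace ℝ (Fin (n + 1))) 1,
      φ (-x) = ν (φ x))
    (ψ : X → EuclideanSpace ℝ (Fin (m + 1)))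
    (hψcont : Continuous ψ)
    (hψmaps : ∀ y : X, ψ y ∈ Metric.sphere (0 : EuclideanSpace ℝ (Fin (m + 1))) 1)
    (hψ : ∀ y : X, ψ (ν y) = - ψ y) :
    n ≤ m := by
  by_contra hnm
  push Not at hnm
  let f : EuclideanSpace ℝ (Fin (n + 1)) → Fin n → ℝ := fun x i =>
    if h : (i : ℕ) < m + 1 then ψ (φ x) ⟨i, h⟩ else 0
  have hf : ∀ i, ContinuousOn (fun x => f x i) (Metric.sphere 0 1) := by
    intro i
    by_cases h : (i : ℕ) < m + 1
    · simp only [f, h, dite_true]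
      have hc : Continuous (fun y : X => ψ y ⟨i, h⟩) := by fun_prop
      exact hc.comp_continuousOn hφcont
    · simp only [f, h, dite_false]
      exact continuousOn_const
  have hodd : ∀ x ∈ Metric.sphere (0 : EuclideanSpace ℝ (Fin (n + 1))) 1, ∀ i,
      f (-x) i = - f x i := by
    intro x hx i
    by_cases h : (i : ℕ) < m + 1
    · simp only [f, h, dite_true, hφ x hx, hψ, PiLp.neg_apply]
    · simp only [f, h, dite_false, neg_zero]
  have hm0 : (0 : ℝ) < (m : ℝ) + 2 := by positivity
  obtain ⟨x, hx, hfx⟩ := bu f hf hodd (1 / ((m : ℝ) + 2)) (by positivity)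
  have h1 := hψmaps (φ x)
  rw [mem_sphere_zero_iff_norm] at h1
  have h2 : ∑ j, (ψ (φ x) j) ^ 2 = 1 := by
    rw [← EuclideanSpace.real_norm_sq_eq, h1, one_pow]
  have h3 : ∀ j, (ψ (φ x) j) ^ 2 ≤ (1 / ((m : ℝ) + 2)) ^ 2 := by
    intro j
    have := hfx ⟨j, by omega⟩
    simp only [f, Fin.is_lt, dite_true, Fin.eta] at this
    exact sq_le_sq' (abs_le.mp this).1 (abs_le.mp this).2
  have h4 : (1 : ℝ) ≤ ((m : ℝ) + 1) * (1 / ((m : ℝ) + 2)) ^ 2 := by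
    refine h2.symm.le.trans ?_
    refine (Finset.sum_le_sum fun j _ => h3 j).trans ?_
    simp
  rw [div_pow, one_pow, mul_one_div, le_div_iff₀ (by positivity)] at h4
  nlinarith
end

section
/- Let r ≥ 1 and let φ : ℤ/(2r+1) → ℤ/3 be a graph homomorphism from the odd cycle C_{2r+1} to K_3, i.e., φ(i+1) ≠ φ(i) for all i ∈ ℤ/(2r+1). For each i let ε_i ∈ {+1, −1} be the unique sign such that φ(i+1) − φ(i) equals ε_i modulo 3. Then the sum Σ_{i ∈ ℤ/(2r+1)} ε_i is divisible by 3, and the winding number w = (Σ_i ε_i)/3 is an odd integer satisfying 3·|w| ≤ 2r + 1. -/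
/-- **Winding numbers of homomorphisms `C_{2r+1} → K_3`**: let `φ` be a graph
homomorphism from the odd cycle `C_{2r+1}` to `K_3`, and for each vertex `i` let
`ε i ∈ {1, -1}` be the unique sign with `φ(i+1) - φ(i) ≡ ε i (mod 3)`. Then
`Σ ε i` is divisible by 3, and the winding number `(Σ ε i)/3` is an odd integer `w`
with `3·|w| ≤ 2r + 1`. -/
theorem winding_number_odd_cycle (r : ℕ) (hr : 1 ≤ r)
    (φ : ZMod (2 * r + 1) → ZMod 3) (hφ : ∀ i, φ (i + 1) ≠ φ i)
    (ε : ZMod (2 * r + 1) → ℤ)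
    (hε : ∀ i, (ε i = 1 ∨ ε i = -1) ∧ ((ε i : ZMod 3) = φ (i + 1) - φ i)) :
    (3 : ℤ) ∣ (∑ i, ε i) ∧ Odd ((∑ i, ε i) / 3) ∧
      3 * |(∑ i, ε i) / 3| ≤ 2 * (r : ℤ) + 1 := by
  have h3 : (3 : ℤ) ∣ ∑ i, ε i := by
    have h : ((∑ i, ε i : ℤ) : ZMod 3) = 0 := by
      rw [Int.cast_sum, Finset.sum_congr rfl (fun i _ => (hε i).2),
        Finset.sum_sub_distrib, sub_eq_zero]
      exact Equiv.sum_comp (Equiv.addRight (1 : ZMod (2 * r + 1))) φ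
    exact (ZMod.intCast_zmod_eq_zero_iff_dvd _ 3).1 h
  have hcard : ∑ _i : ZMod (2 * r + 1), (1 : ℤ) = 2 * (r : ℤ) + 1 := by
    simp [ZMod.card]
  have h2 : (2 : ℤ) ∣ ∑ i, ε i - (2 * (r : ℤ) + 1) := by
    rw [← hcard, ← Finset.sum_sub_distrib]
    apply Finset.dvd_sum
    intro i _
    rcases (hε i).1 with h | h <;> rw [h] <;> norm_num
  have habs : |∑ i, ε i| ≤ 2 * (r : ℤ) + 1 := by
    rw [← hcard]
    refine (Finset.abs_sum_le_sum_abs _ _).trans (Finset.sum_le_sum ?_)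
    intro i _
    rcases (hε i).1 with h | h <;> rw [h] <;> norm_num
  generalize (∑ i, ε i) = S at *
  obtain ⟨w, rfl⟩ := h3
  rw [Int.mul_ediv_cancel_left w (by norm_num)]
  refine ⟨dvd_mul_right _ _, ?_, ?_⟩
  · rw [Int.odd_iff]
    omega
  · rwa [abs_mul, abs_of_pos (by norm_num : (0 : ℤ) < 3)] at habs
end

section
/- Let f assign an integer f(m,n) to every pair of positive integers m, n, and suppose that: f(m,n) = 0 whenever m > n; f(1,n) = 0 for all n ≥ 1; f(n,n) = n! − 1 for all n ≥ 1; and f(m,n) = m·f(m−1, n−1) + (m−1)·f(m, n−1) for all n > m ≥ 2. Then for all n ≥ m ≥ 1, f(m,n) = Σ_{k=1}^{m−1} (−1)^{m+k+1} · C(m, k+1) · k^n, where C(m, k+1) denotes the binomial coefficient. -/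
open Nat


theorem wedge_aux_diag (m : ℕ) : ∑ k ∈ Finset.range (m+1),
      (-1 : ℤ) ^ (m + 1 + k + 1) * ((m+1).choose (k + 1)) * (k : ℤ) ^ (m+1) = ((m+1)! : ℤ) - 1 := by
  have h := fwdDiff_iter_eq_sum_shift (1:ℤ) (fun x : ℤ => x ^ (m+1)) (m+1) (-1)
  rw [fwdDiff_iter_eq_factorial, Finset.sum_range_succ'] at h
  simp only [Pi.natCast_apply] at h
  rw [h]
  have e : (-1 : ℤ) ^ (m+1) * (-1) ^ (m+1) = 1 := by
    rw [← mul_pow]; simp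
  simp [e]
  apply Finset.sum_congr rfl
  intro k hk
  have hk := Finset.mem_range.mp hk
  obtain ⟨d, rfl⟩ : ∃ d, m = k + d := ⟨m - k, by omega⟩
  have e2 : (-1 : ℤ) ^ (k + d + 1 + k + 1) = (-1) ^ d := by
    rw [show k + d + 1 + k + 1 = d + 2 * (k+1) by ring, pow_add, pow_mul]; simp
  simp [e2]

theorem wedge_aux_rec (m n : ℕ) :
    ∑ k ∈ Finset.range (m+2), (-1 : ℤ) ^ (m + 2 + k + 1) * ((m+2).choose (k + 1)) * (k : ℤ) ^ (n+1)
    = (m+2) * ∑ k ∈ Finset.range (m+1), (-1 : ℤ) ^ (m + 1 + k + 1) * ((m+1).choose (k + 1)) * (k : ℤ) ^ n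
    + (m+1) * ∑ k ∈ Finset.range (m+2), (-1 : ℤ) ^ (m + 2 + k + 1) * ((m+2).choose (k + 1)) * (k : ℤ) ^ n := by
  have e : ∑ k ∈ Finset.range (m+1), (-1 : ℤ) ^ (m + 1 + k + 1) * ((m+1).choose (k + 1)) * (k : ℤ) ^ n
    = ∑ k ∈ Finset.range (m+2), (-1 : ℤ) ^ (m + 1 + k + 1) * ((m+1).choose (k + 1)) * (k : ℤ) ^ n := by
    rw [Finset.sum_range_succ _ (m+1)]; simp
  rw [e, Finset.mul_sum, Finset.mul_sum, ← Finset.sum_add_distrib]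
  apply Finset.sum_congr rfl
  intro k hk
  have hk := Finset.mem_range.mp hk
  have c : ((m+2 : ℤ)) * ((m+1).choose (k+1)) = ((m+2).choose (k+1)) * (m + 1 - k) := by
    have := Nat.choose_mul_succ_eq (m+1) (k+1)
    have h2 : ((m + 1 + 1 - (k+1) : ℕ) : ℤ) = m + 1 - k := by omega
    rw [← h2]
    have h3 := congrArg (Nat.cast : ℕ → ℤ) this
    rw [Nat.cast_mul, Nat.cast_mul] at h3
    rw [← h3]; push_cast; ring
  rw [show m + 2 + k + 1 = (m + 1 + k + 1) + 1 by ring, pow_succ (-1 : ℤ), pow_succ (k : ℤ)]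
  linear_combination (-(-1 : ℤ) ^ (m + 1 + k + 1) * (k : ℤ) ^ n) * c

theorem wedge_aux_main (f : ℕ → ℕ → ℤ)
    (h1 : ∀ n : ℕ, 1 ≤ n → f 1 n = 0)
    (h2 : ∀ n : ℕ, 1 ≤ n → f n n = (n ! : ℤ) - 1)
    (h3 : ∀ m n : ℕ, 2 ≤ m → m < n →
      f m n = m * f (m - 1) (n - 1) + (m - 1) * f m (n - 1))
    (n : ℕ) : ∀ m : ℕ, m + 1 ≤ n → f (m+1) n = ∑ k ∈ Finset.range (m+1),
      (-1 : ℤ) ^ (m + 1 + k + 1) * ((m+1).choose (k + 1)) * (k : ℤ) ^ n := by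
  induction n with
  | zero => intro m h; omega
  | succ n ih =>
    intro m h
    rcases m with _ | m
    · rw [h1 _ (by omega)]; simp
    · rcases h.eq_or_lt with h | h
      · rw [← h, wedge_aux_diag, h2 _ (by omega)]
      · rw [h3 _ _ (by omega) h]
        have r := wedge_aux_rec m n
        simp only [Nat.add_sub_cancel]
        rw [ih m (by omega), ih (m+1) (by omega)]
        rw [show m + 1 + 1 = m + 2 from rfl, r]
        push_cast
        ring

/-- The closed-form solution of the recurrence satisfied by the numbers `f(m,n)` of
spheres in the wedge decomposition of `Hom(K_m, K_n)`: if `f(m,n) = 0` for `m > n`,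
`f(1,n) = 0`, `f(n,n) = n! - 1`, and
`f(m,n) = m·f(m-1,n-1) + (m-1)·f(m,n-1)` for `n > m ≥ 2`, then
`f(m,n) = Σ_{k=1}^{m-1} (-1)^{m+k+1} · C(m,k+1) · k^n` for all `n ≥ m ≥ 1`. -/
theorem wedge_count_closed_form (f : ℕ → ℕ → ℤ)
    (h0 : ∀ m n : ℕ, 1 ≤ m → 1 ≤ n → n < m → f m n = 0)
    (h1 : ∀ n : ℕ, 1 ≤ n → f 1 n = 0)
    (h2 : ∀ n : ℕ, 1 ≤ n → f n n = (n ! : ℤ) - 1)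
    (h3 : ∀ m n : ℕ, 2 ≤ m → m < n →
      f m n = m * f (m - 1) (n - 1) + (m - 1) * f m (n - 1))
    (m n : ℕ) (hm : 1 ≤ m) (hmn : m ≤ n) :
    f m n = ∑ k ∈ Finset.Icc 1 (m - 1),
      (-1 : ℤ) ^ (m + k + 1) * (m.choose (k + 1)) * (k : ℤ) ^ n := by
  obtain ⟨m, rfl⟩ : ∃ d, m = d + 1 := ⟨m - 1, by omega⟩
  rw [wedge_aux_main f h1 h2 h3 n m hmn, Finset.sum_range_succ']
  have hn : n ≠ 0 := by omega
  rw [← Finset.Ico_add_one_right_eq_Icc, Finset.sum_Ico_eq_sum_range]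
  simp [hn, add_comm 1]
end

section
/- (Brightwell–Winkler.) Let G be a finite simple graph containing at least one edge, and let d ≥ 1 be an integer. Suppose that for every finite simple graph T with maximum degree at most d, the following holds: the set of graph homomorphisms from T to G, with two homomorphisms related when they differ at exactly one vertex of T, is either empty or connected (any two homomorphisms are joined by a finite chain of such single-vertex changes). Then 2·χ(G) ≥ d + 4, i.e., χ(G) ≥ d/2 + 2. -/
open Filter
/-- Analytic counting lemma. -/
lemma bw_eventually (K : ℕ) (p : ℕ → ℝ) (h0 : ∀ s, 0 ≤ p s) (B : ℝ) (hB : ∀ s, p s ≤ B) :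
    ∀ᶠ M in atTop, (K : ℝ) * p (M + 1) ≤ ∑ s ∈ Finset.range M, p s := by
  by_cases hs : Summable p
  · by_cases hz : ∀ s, p s = 0
    · filter_upwards with M
      simp [hz]
    · push Not at hz
      obtain ⟨s0, hs0⟩ := hz
      have hpos : 0 < p s0 := lt_of_le_of_ne (h0 _) (Ne.symm hs0)
      have h1 : Tendsto (fun M => (K : ℝ) * p (M + 1)) atTop (nhds ((K : ℝ) * 0)) :=
        ((tendsto_add_atTop_iff_nat 1).2 hs.tendsto_atTop_zero).const_mul _
      rw [mul_zero] at h1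
      filter_upwards [h1.eventually (gt_mem_nhds hpos), eventually_gt_atTop s0] with M hM hM'
      exact hM.le.trans (Finset.single_le_sum (f := p) (fun i _ => h0 i) (Finset.mem_range.2 hM'))
  · have h2 := (not_summable_iff_tendsto_nat_atTop_of_nonneg h0).1 hs
    filter_upwards [h2.eventually_ge_atTop (K * B)] with M hM
    exact (mul_le_mul_of_nonneg_left (hB _) (Nat.cast_nonneg _)).trans hM

lemma bw_fiber {P Q A : Type} [Finite P] [Finite Q] (a : P → A) (b : Q → A)
    (h : ∀ t, Nat.card {p // a p = t} ≤ Nat.card {q // b q = t}) :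
    ∃ g : P → Q, Function.Injective g ∧ ∀ p, b (g p) = a p := by
  classical
  have : ∀ t, Nonempty ({p // a p = t} ↪ {q // b q = t}) := fun t => by
    have := Fintype.ofFinite P
    have := Fintype.ofFinite Q
    apply Function.Embedding.nonempty_of_card_le
    simpa [Nat.card_eq_fintype_card] using h t
  have e := fun t => Classical.choice (this t)
  refine ⟨fun p => (e (a p) ⟨p, rfl⟩).1, ?_, fun p => (e (a p) ⟨p, rfl⟩).2⟩
  intro p q hpq
  have h1 : a p = a q := by
    rw [← (e (a p) ⟨p, rfl⟩).2, ← (e (a q) ⟨q, rfl⟩).2]; exact congrArg b hpq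
  have key : ∀ t (ht : a p = t) (hq : a q = t), (e t ⟨p, ht⟩).1 = (e t ⟨q, hq⟩).1 → p = q := by
    intro t ht hq hh
    have := (e t).injective (Subtype.ext hh)
    exact congrArg Subtype.val this
  apply key (a q) h1 rfl
  have h3 : ∀ t (ht : a p = t), (e t ⟨p, ht⟩).1 = (e (a p) ⟨p, rfl⟩).1 := by
    intro t ht; subst ht; rfl
  rw [h3]; exact hpq

def bwSt {A : Type} {K : ℕ} (C : A → A → Fin K → A) (v0 u0 : A) (b : Bool) :
    List (Fin K) → A × A
  | [] => if b then (v0, u0) else (u0, v0)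
  | i :: w => (C (bwSt C v0 u0 b w).1 (bwSt C v0 u0 b w).2 i, (bwSt C v0 u0 b w).1)

lemma bw_assign {A : Type} [Finite A] {K : ℕ} (hK : 0 < K) (ty : Bool → List (Fin K) → A) :
    ∃ M : ℕ, ∃ g : Bool × List (Fin K) → (Bool × List (Fin K) × List (Fin K)) × Fin K,
      (∀ r, r.2.length = M + 1 → (g r).1.2.1.length + (g r).1.2.2.length < M ∧
        ty (g r).1.1 (g r).1.2.1 = ty r.1 r.2) ∧
      ∀ r r', r.2.length = M + 1 → r'.2.length = M + 1 → g r = g r' → r = r' := by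
  classical
  let x : A → ℕ → ℕ := fun a s => Nat.card {r : Bool × List.Vector (Fin K) s // ty r.1 r.2.1 = a}
  have hx : ∀ a s, x a s ≤ 2 * K ^ s := fun a s => by
    have := Nat.card_le_card_of_injective
      (Subtype.val : {r : Bool × List.Vector (Fin K) s // ty r.1 r.2.1 = a} → _)
      Subtype.val_injective
    simpa [x, Nat.card_eq_fintype_card, card_vector] using this
  have hev : ∀ a, ∀ᶠ M in atTop, x a (M + 1) ≤ ∑ s ∈ Finset.range M, x a s * (K ^ (M - 1 - s) * K) := by
    intro a
    have hKr : (0 : ℝ) < K := by exact_mod_cast hK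
    have := bw_eventually K (fun s => (x a s : ℝ) / (K : ℝ) ^ s) (fun s => by positivity) 2
      (fun s => by
        rw [div_le_iff₀ (by positivity)]
        exact_mod_cast hx a s)
    filter_upwards [this] with M hM
    have h2 : (x a (M + 1) : ℝ) ≤ K ^ M * ∑ s ∈ Finset.range M, (x a s : ℝ) / (K : ℝ) ^ s := by
      calc (x a (M + 1) : ℝ) = K ^ M * (K * ((x a (M + 1) : ℝ) / (K : ℝ) ^ (M + 1))) := by
            rw [pow_succ]; field_simp
        _ ≤ _ := by gcongr
    rw [Finset.mul_sum] at h2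
    have h3 : ∑ s ∈ Finset.range M, (K : ℝ) ^ M * ((x a s : ℝ) / (K : ℝ) ^ s)
        = ∑ s ∈ Finset.range M, (x a s : ℝ) * (K ^ (M - 1 - s) * K) := by
      apply Finset.sum_congr rfl
      intro s hs
      have hs := Finset.mem_range.1 hs
      have : M = s + (M - 1 - s) + 1 := by omega
      have h4 : (K : ℝ) ^ M = K ^ s * K ^ (M - 1 - s) * K := by
        conv_lhs => rw [this]
        rw [pow_succ, pow_add]
      rw [h4]; field_simp
    rw [h3] at h2
    exact_mod_cast h2
  obtain ⟨M, hM⟩ := (eventually_all.2 hev).exists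
  let P := Bool × List.Vector (Fin K) (M + 1)
  let Q := (Bool × Σ s : Fin M, List.Vector (Fin K) s × List.Vector (Fin K) (M - 1 - s)) × Fin K
  obtain ⟨g, hg, hgt⟩ := bw_fiber (P := P) (Q := Q) (fun r => ty r.1 r.2.1)
    (fun q => ty q.1.1 q.1.2.2.1.1) (by
      intro a
      refine (hM a).trans ?_
      rw [← Fin.sum_univ_eq_sum_range (fun s => x a s * (K ^ (M - 1 - s) * K))]
      have : ∑ s : Fin M, x a s * (K ^ (M - 1 - (s : ℕ)) * K) = Nat.card
          (Σ s : Fin M, {r : Bool × List.Vector (Fin K) s // ty r.1 r.2.1 = a} ×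
            (List.Vector (Fin K) (M - 1 - s) × Fin K)) := by
        simp [x, Nat.card_eq_fintype_card, card_vector]
      rw [this]
      refine Nat.card_le_card_of_injective (fun z => ⟨((z.2.1.1.1, ⟨z.1, z.2.1.1.2, z.2.2.1⟩), z.2.2.2), z.2.1.2⟩) ?_
      rintro ⟨s, ⟨⟨b, w⟩, hw⟩, p, j⟩ ⟨s', ⟨⟨b', w'⟩, hw'⟩, p', j'⟩ h
      simp only [Subtype.mk.injEq] at h
      obtain ⟨⟨rfl, rfl, h⟩, rfl⟩ := h
      rfl)
  let emb : Q → (Bool × List (Fin K) × List (Fin K)) × Fin K :=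
    fun q => ((q.1.1, q.1.2.2.1.1, q.1.2.2.2.1), q.2)
  have hemb : Function.Injective emb := by
    rintro ⟨⟨b, s, ⟨w, hw⟩, ⟨p, hp⟩⟩, j⟩ ⟨⟨b', s', ⟨w', hw'⟩, ⟨p', hp'⟩⟩, j'⟩ h
    simp only [emb, Prod.mk.injEq] at h
    obtain ⟨⟨rfl, rfl, rfl⟩, rfl⟩ := h
    have : s = s' := Fin.ext (hw.symm.trans hw')
    subst this
    rfl
  refine ⟨M, fun r => if h : r.2.length = M + 1 then emb (g (r.1, ⟨r.2, h⟩)) else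
    ((r.1, [], []), ⟨0, hK⟩), ?_, ?_⟩
  · intro r hr
    simp only [hr, dite_true]
    refine ⟨?_, hgt (r.1, ⟨r.2, hr⟩)⟩
    generalize g (r.1, ⟨r.2, hr⟩) = q
    obtain ⟨⟨b, s, ⟨w, hw⟩, ⟨p, hp⟩⟩, j⟩ := q
    simp only [emb, hw, hp]
    omega
  · intro r r' hr hr' h
    simp only [hr, hr', dite_true] at h
    have := hg (hemb h)
    exact Prod.ext (congrArg (fun z : P => z.1) this) (congrArg (fun z : P => z.2.1) this)

lemma bw_struct_pos {A : Type} [Finite A] (act : A → A → Prop) (hsymm : ∀ x y, act x y → act y x)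
    {K : ℕ} (hK : 0 < K) (C : A → A → Fin K → A) (hC : ∀ v u, act v u → ∀ i, act v (C v u i))
    (v0 u0 : A) (h0 : act v0 u0) :
    ∃ (α : Type) (_ : Finite α) (_ : Nonempty α) (τ : α → A) (adj : α → α → Prop),
      (∀ x y, adj x y → adj y x) ∧ (∀ x y, adj x y → act (τ x) (τ y)) ∧
      (∀ x, {y | adj x y}.ncard ≤ 2 * K + 1) ∧
      ∀ x, ∃ u, act (τ x) u ∧ (∃ y, adj x y ∧ τ y = u) ∧
        ∀ i, ∃ y, adj x y ∧ τ y = C (τ x) u i := by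
  classical
  let st := bwSt C v0 u0
  have hst : ∀ b w, act (st b w).1 (st b w).2 := by
    intro b w
    induction w with
    | nil => cases b
             · exact hsymm _ _ h0
             · exact h0
    | cons i w ih => exact hsymm _ _ (hC _ _ ih i)
  obtain ⟨M, g, hg1, hg2⟩ := bw_assign hK (fun b w => (st b w).1)
  let N := Bool × List (Fin K) × List (Fin K)
  let len : N → ℕ := fun x => x.2.1.length + x.2.2.length
  let τ : N → A := fun x => (st x.1 x.2.1).1
  let υ : N → A := fun x => (st x.1 x.2.1).2
  let mate : N → N := fun x => match x with
    | (b, [], p) => (!b, [], p)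
    | (b, _ :: w, p) => (b, w, p)
  let E : N → Fin K → N := fun x i => if len x < M then (x.1, i :: x.2.1, x.2.2) else
    match x with
    | (b, w, _ :: p) => (b, i :: w, p)
    | (b, w, []) => (g (b, i :: w)).1
  let H : N → Fin K → N := fun x j => if len x < M then
      (if h : ∃ r : Bool × List (Fin K), r.2.length = M + 1 ∧ g r = (x, j) then
        (h.choose.1, h.choose.2.tail, []) else x)
    else (x.1, x.2.1.tail, j :: x.2.2)
  have hmlen : ∀ x, len x ≤ M → len (mate x) ≤ M := by
    rintro ⟨b, _ | ⟨i, w⟩, p⟩ h <;> simp only [len, mate, List.length_cons] at h ⊢ <;> omega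
  have hElen : ∀ x i, len x ≤ M → len (E x i) ≤ M := by
    rintro ⟨b, w, p⟩ i h
    by_cases hl : len (b, w, p) < M
    · simp only [E, hl, if_true]
      simp only [len, List.length_cons] at hl ⊢
      omega
    · simp only [E, hl, if_false]
      cases p with
      | cons j p => simp only [len, List.length_cons] at h hl ⊢; omega
      | nil =>
        have : w.length = M := by simp only [len, List.length_nil] at h hl; omega
        exact (hg1 (b, i :: w) (by simp [this])).1.le
  have hmτ : ∀ x, τ (mate x) = υ x := by
    rintro ⟨b, _ | ⟨i, w⟩, p⟩
    · cases b <;> rfl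
    · rfl
  have hEτ : ∀ x i, len x ≤ M → τ (E x i) = C (τ x) (υ x) i := by
    rintro ⟨b, w, p⟩ i h
    by_cases hl : len (b, w, p) < M
    · simp only [E, hl, if_true]; rfl
    · simp only [E, hl, if_false]
      cases p with
      | cons j p => rfl
      | nil =>
        have : w.length = M := by simp only [len, List.length_nil] at h hl; omega
        exact (hg1 (b, i :: w) (by simp [this])).2
  have hm_inv : ∀ x y, len y ≤ M → mate y = x → y = mate x ∨ ∃ i, y = E x i := by
    rintro x ⟨b, _ | ⟨i, w⟩, p⟩ h rfl
    · left; simp [mate]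
    · right
      refine ⟨i, ?_⟩
      have hl : len (b, w, p) < M := by
        simp only [len, List.length_cons] at h ⊢; omega
      simp only [mate, E, hl, if_true]
  have hE_inv : ∀ x y i, len y ≤ M → E y i = x → y = mate x ∨ ∃ j, y = H x j := by
    rintro x ⟨b, w, p⟩ i h rfl
    by_cases hl : len (b, w, p) < M
    · left; simp only [E, hl, if_true]; rfl
    · right
      simp only [E, hl, if_false]
      cases p with
      | cons j p =>
        refine ⟨j, ?_⟩
        have hl' : ¬ len (b, i :: w, p) < M := by
          simp only [len, List.length_cons] at hl ⊢; omega
        simp only [H, hl', if_false, List.tail_cons]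
      | nil =>
        have hw : w.length = M := by simp only [len, List.length_nil] at h hl; omega
        have hw' : (b, i :: w).2.length = M + 1 := by simp [hw]
        refine ⟨(g (b, i :: w)).2, ?_⟩
        have hl' : len (g (b, i :: w)).1 < M := (hg1 _ hw').1
        have hex : ∃ r : Bool × List (Fin K), r.2.length = M + 1 ∧
            g r = ((g (b, i :: w)).1, (g (b, i :: w)).2) := ⟨_, hw', rfl⟩
        have hr := hg2 _ _ hex.choose_spec.1 hw' hex.choose_spec.2
        simp only [H, hl', if_true]
        rw [dif_pos hex, hr]
        rfl
  let R : N → N → Prop := fun x y => y = mate x ∨ ∃ i, y = E x i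
  have hRact : ∀ x y, len x ≤ M → R x y → act (τ x) (τ y) := by
    rintro x y hx (rfl | ⟨i, rfl⟩)
    · rw [hmτ]; exact hst _ _
    · rw [hEτ x i hx]; exact hC _ _ (hst _ _) i
  refine ⟨{x : N // len x ≤ M}, ?_, ⟨⟨(true, [], []), by simp [len]⟩⟩, fun x => τ x.1,
    fun x y => R x.1 y.1 ∨ R y.1 x.1, fun x y h => h.symm, ?_, ?_, ?_⟩
  · have hf : Set.Finite {l : List (Fin K) | l.length ≤ M} := List.finite_length_le _ _
    have : Set.Finite {x : N | len x ≤ M} := by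
      refine (Set.finite_univ.prod (hf.prod hf)).subset ?_
      rintro ⟨b, w, p⟩ h
      have h' : w.length + p.length ≤ M := h
      refine ⟨trivial, (?_ : w.length ≤ M), (?_ : p.length ≤ M)⟩ <;> omega
    exact this.to_subtype
  · rintro x y (h | h)
    · exact hRact _ _ x.2 h
    · exact hsymm _ _ (hRact _ _ y.2 h)
  · intro x
    let s : Finset N := {mate x.1} ∪ (Finset.univ.image (E x.1) ∪ Finset.univ.image (H x.1))
    have hs : s.card ≤ 2 * K + 1 := by
      refine (Finset.card_union_le _ _).trans ?_
      have h1 := Finset.card_union_le (Finset.univ.image (E x.1)) (Finset.univ.image (H x.1))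
      have h2 := Finset.card_image_le (s := Finset.univ) (f := E x.1)
      have h3 := Finset.card_image_le (s := Finset.univ) (f := H x.1)
      simp only [Finset.card_univ, Fintype.card_fin, Finset.card_singleton] at *
      omega
    rw [← Set.ncard_image_of_injective _ Subtype.val_injective]
    refine le_trans (Set.ncard_le_ncard ?_ s.finite_toSet) ((Set.ncard_coe_finset s).trans_le hs)
    rintro _ ⟨y, hy, rfl⟩
    simp only [s, Finset.coe_union, Finset.coe_image, Set.mem_union, Finset.coe_singleton,
      Set.mem_singleton_iff, Finset.coe_univ, Set.image_univ, Set.mem_range]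
    rcases hy with (h | ⟨i, h⟩) | (h | ⟨i, h⟩)
    · exact Or.inl h
    · exact Or.inr (Or.inl ⟨i, h.symm⟩)
    · rcases hm_inv x.1 y.1 y.2 h.symm with h | ⟨i, h⟩
      · exact Or.inl h
      · exact Or.inr (Or.inl ⟨i, h.symm⟩)
    · rcases hE_inv x.1 y.1 i y.2 h.symm with h | ⟨j, h⟩
      · exact Or.inl h
      · exact Or.inr (Or.inr ⟨j, h.symm⟩)
  · intro x
    refine ⟨υ x.1, hst _ _, ⟨⟨mate x.1, hmlen _ x.2⟩, Or.inl (Or.inl rfl), hmτ _⟩, fun i => ?_⟩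
    exact ⟨⟨E x.1 i, hElen _ _ x.2⟩, Or.inl (Or.inr ⟨i, rfl⟩), hEτ _ _ x.2⟩

lemma bw_struct {A : Type} [Finite A] (act : A → A → Prop) (hsymm : ∀ x y, act x y → act y x)
    {K : ℕ} (C : A → A → Fin K → A) (hC : ∀ v u, act v u → ∀ i, act v (C v u i))
    (v0 u0 : A) (h0 : act v0 u0) :
    ∃ (α : Type) (_ : Finite α) (_ : Nonempty α) (τ : α → A) (adj : α → α → Prop),
      (∀ x y, adj x y → adj y x) ∧ (∀ x y, adj x y → act (τ x) (τ y)) ∧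
      (∀ x, {y | adj x y}.ncard ≤ 2 * K + 1) ∧
      ∀ x, ∃ u, act (τ x) u ∧ (∃ y, adj x y ∧ τ y = u) ∧
        ∀ i, ∃ y, adj x y ∧ τ y = C (τ x) u i := by
  rcases Nat.eq_zero_or_pos K with rfl | hK
  · refine ⟨Bool, inferInstance, inferInstance, fun b => if b then v0 else u0,
      fun x y => y = !x, ?_, ?_, ?_, ?_⟩
    · rintro x _ rfl; simp
    · rintro x _ rfl
      cases x
      · exact hsymm _ _ h0
      · exact h0
    · intro x; simp
    · intro x
      refine ⟨_, ?_, ⟨!x, rfl, rfl⟩, fun i => i.elim0⟩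
      cases x
      · exact hsymm _ _ h0
      · exact h0
  · exact bw_struct_pos act hsymm hK C hC v0 u0 h0

open scoped InnerProductSpace

lemma bw_cara {V E : Type} [Fintype V] [NormedAddCommGroup E] [InnerProductSpace ℝ E]
    [FiniteDimensional ℝ E] {K : ℕ} (hE : Module.finrank ℝ E ≤ K + 1) (f : V → E) (x : E)
    (S : Finset V) (hS : ∀ a ∈ S, ⟪f a, x⟫_ℝ = 1) (w : V → ℝ) (hw : ∀ a, 0 ≤ w a)
    (hx : ∑ a ∈ S, w a • f a = x) (u : V) (hu : u ∈ S) :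
    ∃ C : Fin K → V, (∀ i, C i ∈ S) ∧ ∀ y : E, ⟪y, f u⟫_ℝ ≤ -1 → (∀ i, ⟪y, f (C i)⟫_ℝ ≤ -1) →
      ⟪y, x⟫_ℝ ≤ -⟪x, x⟫_ℝ := by
  classical
  let good : Finset V → Prop := fun B => u ∉ B ∧ B ⊆ S ∧ ∃ w : V → ℝ, (∀ a, 0 ≤ w a) ∧
    ∑ a ∈ insert u B, w a • f a = x
  have hex : ∃ m, ∃ B, good B ∧ B.card = m :=
    ⟨_, S.erase u, ⟨by simp, Finset.erase_subset _ _, w, hw, by rw [Finset.insert_erase hu, hx]⟩, rfl⟩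
  obtain ⟨B, ⟨huB, hBS, w, hw, hsum⟩, hBc⟩ := Nat.find_spec hex
  have hmin : ∀ B', good B' → B.card ≤ B'.card := fun B' hB' =>
    hBc ▸ Nat.find_min' hex ⟨B', hB', rfl⟩
  have hBK : B.card ≤ K := by
    by_contra hlt
    push Not at hlt
    have hnl : ¬ LinearIndependent ℝ (fun a : ↥(insert u B) => f a.1) := by
      intro hli
      have := hli.fintype_card_le_finrank
      simp only [Fintype.card_coe, Finset.card_insert_of_notMem huB] at this
      omega
    rw [Fintype.not_linearIndependent_iff] at hnl
    obtain ⟨g0, hg0, i0, hi0⟩ := hnl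
    -- relation with nonpositive coefficient at u
    have hrel : ∃ g : V → ℝ, ∑ a ∈ insert u B, g a • f a = 0 ∧ (∃ a ∈ insert u B, g a ≠ 0) ∧
        g u ≤ 0 := by
      let g1 : V → ℝ := fun a => if h : a ∈ insert u B then g0 ⟨a, h⟩ else 0
      have h1 : ∑ a ∈ insert u B, g1 a • f a = 0 := by
        rw [← Finset.sum_coe_sort, ← hg0]
        apply Finset.sum_congr rfl
        intro a _
        simp only [g1, a.2, dite_true]
      have h2 : g1 i0.1 ≠ 0 := by simpa only [g1, i0.2, dite_true] using hi0
      rcases le_total (g1 u) 0 with h | h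
      · exact ⟨g1, h1, ⟨i0.1, i0.2, h2⟩, h⟩
      · refine ⟨fun a => - g1 a, ?_, ⟨i0.1, i0.2, neg_ne_zero.2 h2⟩, by simpa using h⟩
        simp only [neg_smul, Finset.sum_neg_distrib, h1, neg_zero]
    obtain ⟨g, hg, ⟨a0, ha0, hga0⟩, hgu⟩ := hrel
    have hgs : ∑ a ∈ insert u B, g a = 0 := by
      have := congrArg (fun z => ⟪z, x⟫_ℝ) hg
      simp only [sum_inner, inner_smul_left, inner_zero_left] at this
      rw [← this]
      apply Finset.sum_congr rfl
      intro a ha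
      have haS : a ∈ S := by
        rcases Finset.mem_insert.1 ha with rfl | h
        · exact hu
        · exact hBS h
      simp [hS a haS]
    have hpos : ∃ b ∈ B, 0 < g b := by
      by_contra hno
      push Not at hno
      have hle : ∀ a ∈ insert u B, g a ≤ 0 := by
        intro a ha
        rcases Finset.mem_insert.1 ha with rfl | h
        · exact hgu
        · exact hno a h
      exact hga0 ((Finset.sum_eq_zero_iff_of_nonpos hle).1 hgs a0 ha0)
    obtain ⟨b, hb, hbmin⟩ := Finset.exists_min_image (B.filter (fun b => 0 < g b))
      (fun b => w b / g b) (by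
        obtain ⟨b, hb, h⟩ := hpos
        exact ⟨b, Finset.mem_filter.2 ⟨hb, h⟩⟩)
    rw [Finset.mem_filter] at hb
    let θ := w b / g b
    have hθ : 0 ≤ θ := div_nonneg (hw b) hb.2.le
    have hgood : good (B.erase b) := by
      refine ⟨fun h => huB (Finset.mem_of_mem_erase h), (Finset.erase_subset _ _).trans hBS,
        fun a => if a ∈ insert u B then w a - θ * g a else 0, ?_, ?_⟩
      · intro a
        dsimp only
        split_ifs with ha
        · rcases le_or_gt (g a) 0 with h | h
          · nlinarith [hw a]
          · have haB : a ∈ B := by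
              rcases Finset.mem_insert.1 ha with rfl | h'
              · linarith
              · exact h'
            have := hbmin a (Finset.mem_filter.2 ⟨haB, h⟩)
            have h4 : θ * g a ≤ w a := (le_div_iff₀ h).1 this
            linarith
        · exact le_rfl
      · have hbu : b ≠ u := fun h => huB (h ▸ hb.1)
        have hsub : insert u (B.erase b) = (insert u B).erase b := by
          rw [Finset.erase_insert_of_ne hbu.symm]
        rw [hsub]
        have hzero : ∀ F : V → E, F b = 0 → ∑ a ∈ (insert u B).erase b, F a = ∑ a ∈ insert u B, F a :=
          fun F hF => Finset.sum_erase _ hF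
        rw [hzero]
        · rw [Finset.sum_congr rfl (g := fun a => w a • f a - θ • (g a • f a))]
          · rw [Finset.sum_sub_distrib, ← Finset.smul_sum, hg, hsum]; simp
          · intro a ha
            beta_reduce
            rw [if_pos ha, sub_smul, mul_smul]
        · beta_reduce
          rw [if_pos (Finset.mem_insert_of_mem hb.1)]
          have : θ * g b = w b := div_mul_cancel₀ _ hb.2.ne'
          rw [this]; simp
    have := hmin _ hgood
    have h5 := Finset.card_erase_lt_of_mem hb.1
    omega
  obtain ⟨C, hCS, hCB⟩ : ∃ C : Fin K → V, (∀ i, C i ∈ S) ∧ ∀ b ∈ B, ∃ i, C i = b := by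
    let e := B.equivFin
    refine ⟨fun i => if h : i.1 < B.card then (e.symm ⟨i.1, h⟩).1 else u, ?_, ?_⟩
    · intro i
      dsimp only
      split_ifs with h
      · exact hBS (e.symm ⟨i.1, h⟩).2
      · exact hu
    · intro b hb
      refine ⟨⟨(e ⟨b, hb⟩).1, lt_of_lt_of_le (e ⟨b, hb⟩).2 hBK⟩, ?_⟩
      simp
  refine ⟨C, hCS, fun y hyu hy => ?_⟩
  have hyB : ∀ a ∈ insert u B, ⟪y, f a⟫_ℝ ≤ -1 := by
    intro a ha
    rcases Finset.mem_insert.1 ha with rfl | h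
    · exact hyu
    · obtain ⟨i, rfl⟩ := hCB a h
      exact hy i
  have h1 : ⟪x, x⟫_ℝ = ∑ a ∈ insert u B, w a := by
    conv_lhs => rw [← hsum]
    rw [sum_inner]
    apply Finset.sum_congr rfl
    intro a ha
    have haS : a ∈ S := by
      rcases Finset.mem_insert.1 ha with rfl | h
      · exact hu
      · exact hBS h
    rw [inner_smul_left, hsum, hS a haS]; simp
  have h2 : ⟪y, x⟫_ℝ = ∑ a ∈ insert u B, w a * ⟪y, f a⟫_ℝ := by
    conv_lhs => rw [← hsum]
    rw [inner_sum]
    apply Finset.sum_congr rfl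
    intro a ha
    rw [inner_smul_right]
  rw [h1, h2, ← Finset.sum_neg_distrib]
  apply Finset.sum_le_sum
  intro a ha
  nlinarith [hw a, hyB a ha]

/-- simplex vectors -/
lemma bw_simplex (K : ℕ) : ∃ (E : Type) (_ : NormedAddCommGroup E) (_ : InnerProductSpace ℝ E)
    (_ : FiniteDimensional ℝ E) (e : Fin (K + 2) → E), Module.finrank ℝ E ≤ K + 1 ∧
    ∀ i j, i ≠ j → ⟪e i, e j⟫_ℝ = -1 := by
  let F := EuclideanSpace ℝ (Fin (K + 2))
  let o : F := ∑ i, EuclideanSpace.single i (1 : ℝ)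
  have hoi : ∀ i, ⟪o, EuclideanSpace.single i (1 : ℝ)⟫_ℝ = 1 := by
    intro i
    rw [EuclideanSpace.inner_single_right]
    have h1 : o.ofLp i = ∑ j : Fin (K + 2), (EuclideanSpace.single j (1 : ℝ)).ofLp i := by
      have h2 : o.ofLp = ∑ j : Fin (K + 2), (EuclideanSpace.single j (1 : ℝ)).ofLp :=
        map_sum (WithLp.linearEquiv 2 ℝ (Fin (K + 2) → ℝ)) _ _
      rw [h2, Finset.sum_apply]
    rw [h1]
    simp [Pi.single_apply]
  have hoi' : ∀ i, ⟪EuclideanSpace.single i (1 : ℝ), o⟫_ℝ = 1 := by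
    intro i; rw [real_inner_comm]; exact hoi i
  have hoo : ⟪o, o⟫_ℝ = K + 2 := by
    conv_lhs => rw [show o = ∑ i, EuclideanSpace.single i (1 : ℝ) from rfl]
    rw [inner_sum, Finset.sum_congr rfl (fun i _ => hoi i)]
    simp
  have ho : o ≠ 0 := by
    intro h
    rw [h, inner_zero_left] at hoo
    have : (0 : ℝ) < K + 2 := by positivity
    linarith
  have hK : (0 : ℝ) < K + 2 := by positivity
  let v : Fin (K + 2) → F := fun i => EuclideanSpace.single i (1 : ℝ) - (1 / (K + 2 : ℝ)) • o
  have hv : ∀ i, v i ∈ (Submodule.span ℝ {o})ᗮ := by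
    intro i
    rw [Submodule.mem_orthogonal_singleton_iff_inner_right]
    simp only [v, inner_sub_right, inner_smul_right, hoi, hoo]
    field_simp; simp
  refine ⟨(Submodule.span ℝ {o})ᗮ, inferInstance, inferInstance, inferInstance,
    fun i => ⟨√(K + 2 : ℝ) • v i, Submodule.smul_mem _ _ (hv i)⟩, ?_, ?_⟩
  · have h1 := Submodule.finrank_add_finrank_orthogonal (Submodule.span ℝ {o})
    rw [finrank_span_singleton ho] at h1
    have : Module.finrank ℝ F = K + 2 := by simp [F]
    omega
  · intro i j hij
    have h0 : ⟪(EuclideanSpace.single i (1 : ℝ) : F), EuclideanSpace.single j (1 : ℝ)⟫_ℝ = 0 := by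
      simp [EuclideanSpace.inner_single_right, hij.symm]
    rw [Submodule.coe_inner]
    simp only [inner_smul_left, inner_smul_right, v, inner_sub_left, inner_sub_right, hoi, hoi', hoo, h0]
    have h3 : √(K + 2 : ℝ) * √(K + 2 : ℝ) = K + 2 := Real.mul_self_sqrt hK.le
    simp only [conj_trivial]
    have h4 : 1 / (K + 2 : ℝ) * (K + 2) = 1 := by field_simp
    rw [h4]
    calc _ = -(1 / (K + 2 : ℝ) * (√(K + 2 : ℝ) * √(K + 2 : ℝ))) := by ring
      _ = -1 := by rw [h3, h4]

lemma bw_kkt {V E : Type} [Fintype V] [NormedAddCommGroup E] [InnerProductSpace ℝ E]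
    [FiniteDimensional ℝ E] (G : SimpleGraph V) (hedge : ∃ x y, G.Adj x y) (f0 : V → E)
    (hf0 : ∀ x y, G.Adj x y → ⟪f0 x, f0 y⟫_ℝ ≤ -1) :
    ∃ (f : V → E) (R : ℝ), (∀ x y, G.Adj x y → ⟪f x, f y⟫_ℝ ≤ -1) ∧ (∀ v, ‖f v‖ ≤ R) ∧
      (∃ v, ‖f v‖ = R) ∧ 0 < R ∧
      ∀ v, ‖f v‖ = R → ∃ (S : Finset V) (w : V → ℝ),
        (∀ u, u ∈ S ↔ G.Adj v u ∧ ‖f u‖ = R ∧ ⟪f v, f u⟫_ℝ = -1) ∧ (∀ a, 0 ≤ w a) ∧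
        ∑ a ∈ S, w a • f a = - f v := by
  classical
  let Feas : Set (V → E) := {f | ∀ x y, G.Adj x y → ⟪f x, f y⟫_ℝ ≤ -1}
  have hclosed : IsClosed Feas := by
    have : Feas = ⋂ x, ⋂ y, ⋂ (_ : G.Adj x y), {f : V → E | ⟪f x, f y⟫_ℝ ≤ -1} := by
      ext f; simp [Feas]
    rw [this]
    refine isClosed_iInter fun x => isClosed_iInter fun y => isClosed_iInter fun _ => ?_
    exact isClosed_le (by fun_prop) continuous_const
  obtain ⟨f1, hf1, hd⟩ := hclosed.exists_infDist_eq_dist ⟨f0, hf0⟩ (0 : V → E)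
  let R := ‖f1‖
  have hRmin : ∀ f ∈ Feas, R ≤ ‖f‖ := by
    intro f hf
    have := Metric.infDist_le_dist_of_mem (x := (0 : V → E)) hf
    rw [hd, dist_zero_left, dist_zero_left] at this
    exact this
  have hR : 0 < R := by
    obtain ⟨x, y, hxy⟩ := hedge
    refine norm_pos_iff.2 fun h => ?_
    have := hf1 x y hxy
    simp [h] at this
    linarith
  have hnolt : ∀ f ∈ Feas, ¬ ∀ v, ‖f v‖ < R := by
    intro f hf h
    exact absurd ((pi_norm_lt_iff hR).2 h) (not_lt.2 (hRmin f hf))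
  let cnt : (V → E) → ℕ := fun f => (Finset.univ.filter (fun v => ‖f v‖ = R)).card
  have hex : ∃ m, ∃ f ∈ Feas, (∀ v, ‖f v‖ ≤ R) ∧ cnt f = m :=
    ⟨_, f1, hf1, fun v => norm_le_pi_norm f1 v, rfl⟩
  obtain ⟨f2, hf2, hf2R, hf2c⟩ := Nat.find_spec hex
  have hmin : ∀ f ∈ Feas, (∀ v, ‖f v‖ ≤ R) → cnt f2 ≤ cnt f := fun f h1 h2 =>
    hf2c ▸ Nat.find_min' hex ⟨f, h1, h2, rfl⟩
  -- scale the short vectors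
  obtain ⟨δ, hδ0, hδ⟩ : ∃ δ : ℝ, 0 < δ ∧ ∀ v, ‖f2 v‖ < R → (1 + δ) * ‖f2 v‖ < R := by
    have : ∀ᶠ δ in nhdsWithin (0 : ℝ) (Set.Ioi 0), ∀ v, ‖f2 v‖ < R → (1 + δ) * ‖f2 v‖ < R := by
      rw [eventually_all]
      intro v
      by_cases hv : ‖f2 v‖ < R
      · have hc : Tendsto (fun δ : ℝ => (1 + δ) * ‖f2 v‖) (nhds 0) (nhds ((1 + 0) * ‖f2 v‖)) :=
          Continuous.tendsto (by fun_prop) 0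
        rw [add_zero, one_mul] at hc
        filter_upwards [nhdsWithin_le_nhds (hc.eventually (gt_mem_nhds hv))] with δ h _ using h
      · filter_upwards with δ h using absurd h hv
    obtain ⟨δ, h1, h2⟩ := (this.and self_mem_nhdsWithin).exists
    exact ⟨δ, h2, h1⟩
  let c : V → ℝ := fun v => if ‖f2 v‖ < R then 1 + δ else 1
  have hc1 : ∀ v, 1 ≤ c v := fun v => by simp only [c]; split_ifs <;> linarith
  let f : V → E := fun v => c v • f2 v
  have hfn : ∀ v, ‖f v‖ = R ↔ ‖f2 v‖ = R := by
    intro v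
    simp only [f, c, norm_smul]
    split_ifs with h
    · rw [Real.norm_of_nonneg (by linarith)]
      exact ⟨fun h' => absurd h' (hδ v h).ne, fun h' => absurd h' h.ne⟩
    · simp
  have hfR : ∀ v, ‖f v‖ ≤ R := by
    intro v
    simp only [f, c, norm_smul]
    split_ifs with h
    · rw [Real.norm_of_nonneg (by linarith)]
      exact (hδ v h).le
    · simpa using hf2R v
  have hff : ∀ x y, ⟪f x, f y⟫_ℝ = c x * c y * ⟪f2 x, f2 y⟫_ℝ := by
    intro x y
    simp only [f, inner_smul_left, inner_smul_right, conj_trivial]; ring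
  have hfF : f ∈ Feas := by
    intro x y hxy
    rw [hff]
    have h1 := hf2 x y hxy
    have h2 : 1 ≤ c x * c y := one_le_mul_of_one_le_of_one_le (hc1 x) (hc1 y)
    nlinarith
  have hslack : ∀ x y, G.Adj x y → ‖f y‖ ≠ R → ⟪f x, f y⟫_ℝ < -1 := by
    intro x y hxy hy
    have hlt : ‖f2 y‖ < R := lt_of_le_of_ne (hf2R y) (fun h => hy ((hfn y).2 h))
    have hcy : c y = 1 + δ := by simp only [c, hlt, if_true]
    rw [hff, hcy]
    have h1 := hf2 x y hxy
    have h2 := hc1 x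
    have h3 : 1 < c x * (1 + δ) := by nlinarith
    nlinarith
  have hcnt : ∀ f' ∈ Feas, (∀ v, ‖f' v‖ ≤ R) → cnt f ≤ cnt f' := by
    intro f' h1 h2
    have : cnt f = cnt f2 := by simp only [cnt, hfn]
    rw [this]; exact hmin f' h1 h2
  clear_value f
  refine ⟨f, R, hfF, hfR, ?_, hR, ?_⟩
  · by_contra hno
    push Not at hno
    exact hnolt f hfF fun v => lt_of_le_of_ne (hfR v) (hno v)
  intro v hv
  let S : Finset V := Finset.univ.filter fun u => G.Adj v u ∧ ‖f u‖ = R ∧ ⟪f v, f u⟫_ℝ = -1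
  have hS : ∀ u, u ∈ S ↔ G.Adj v u ∧ ‖f u‖ = R ∧ ⟪f v, f u⟫_ℝ = -1 := fun u => by simp [S]
  have hvv : ⟪f v, f v⟫_ℝ = R ^ 2 := by rw [real_inner_self_eq_norm_sq, hv]
  let q : E := -(1 / R ^ 2) • f v
  by_cases hq : q ∈ convexHull ℝ ((S.image f : Finset E) : Set E)
  · let B : Set E := {p | ∃ w : V → ℝ, (∀ a, 0 ≤ w a) ∧ ∑ a ∈ S, w a • f a = p}
    have hB : Convex ℝ B := by
      rintro p ⟨w1, h1, rfl⟩ p2 ⟨w2, h2, rfl⟩ a b ha hb _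
      refine ⟨fun x => a * w1 x + b * w2 x, fun x => add_nonneg (mul_nonneg ha (h1 x))
        (mul_nonneg hb (h2 x)), ?_⟩
      simp only [add_smul, mul_smul, Finset.sum_add_distrib, Finset.smul_sum]
    have hsub : ((S.image f : Finset E) : Set E) ⊆ B := by
      intro p hp
      obtain ⟨a, ha, rfl⟩ := Finset.mem_image.1 (Finset.mem_coe.1 hp)
      refine ⟨fun x => if x = a then 1 else 0, fun x => by dsimp only; split_ifs <;> norm_num, ?_⟩
      simp [ite_smul, ha]
    obtain ⟨w, hw0, hw⟩ := convexHull_min hsub hB hq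
    refine ⟨S, fun a => R ^ 2 * w a, hS, fun a => mul_nonneg (sq_nonneg R) (hw0 a), ?_⟩
    simp only [mul_smul, ← Finset.smul_sum, hw, q]
    have hR2 : R ^ 2 ≠ 0 := by positivity
    rw [smul_smul, show R ^ 2 * -(1 / R ^ 2) = -1 by field_simp, neg_one_smul]
  exfalso
  obtain ⟨φ, s, hs1, hs2⟩ := geometric_hahn_banach_closed_point (convex_convexHull ℝ _)
    ((S.image f).finite_toSet.isCompact_convexHull (𝕜 := ℝ)).isClosed hq
  let z : E := (InnerProductSpace.toDual ℝ E).symm φ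
  have hz : ∀ y, φ y = ⟪z, y⟫_ℝ := fun y => by simp [z]
  let z' : E := z + s • f v
  have hz'a : ∀ a ∈ S, ⟪z', f a⟫_ℝ < 0 := by
    intro a ha
    have h1 := hs1 (f a) (subset_convexHull ℝ _ (by simpa using ⟨a, ha, rfl⟩))
    rw [hz] at h1
    have h2 := ((hS a).1 ha).2.2
    simp only [z', inner_add_left, inner_smul_left, conj_trivial, h2]
    linarith
  have hz'v : ⟪z', f v⟫_ℝ < 0 := by
    rw [hz] at hs2
    simp only [q, inner_smul_right] at hs2
    simp only [z', inner_add_left, inner_smul_left, conj_trivial, hvv]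
    have hR2 : 0 < R ^ 2 := by positivity
    have : s * R ^ 2 < -(1 / R ^ 2) * ⟪z, f v⟫_ℝ * R ^ 2 := mul_lt_mul_of_pos_right hs2 hR2
    have h4 : -(1 / R ^ 2) * ⟪z, f v⟫_ℝ * R ^ 2 = - ⟪z, f v⟫_ℝ := by field_simp
    linarith
  -- small perturbation
  obtain ⟨ε, hε0, hε1, hε2⟩ : ∃ ε : ℝ, 0 < ε ∧ ‖f v + ε • z'‖ < R ∧
      ∀ u, G.Adj v u → ⟪f v + ε • z', f u⟫_ℝ ≤ -1 := by
    have e1 : ∀ᶠ ε in nhdsWithin (0 : ℝ) (Set.Ioi 0), ‖f v + ε • z'‖ < R := by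
      have hc : Tendsto (fun ε : ℝ => 2 * ⟪z', f v⟫_ℝ + ε * ‖z'‖ ^ 2) (nhds 0)
          (nhds (2 * ⟪z', f v⟫_ℝ + 0 * ‖z'‖ ^ 2)) := Continuous.tendsto (by fun_prop) 0
      have hlt : 2 * ⟪z', f v⟫_ℝ + 0 * ‖z'‖ ^ 2 < 0 := by linarith
      filter_upwards [nhdsWithin_le_nhds (hc.eventually (gt_mem_nhds hlt)), self_mem_nhdsWithin]
        with ε h1 h2
      have h2 : 0 < ε := h2
      refine lt_of_pow_lt_pow_left₀ 2 hR.le ?_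
      rw [norm_add_sq_real, hv, inner_smul_right, norm_smul, real_inner_comm, mul_pow,
        Real.norm_eq_abs, sq_abs]
      nlinarith
    have e2 : ∀ᶠ ε in nhdsWithin (0 : ℝ) (Set.Ioi 0), ∀ u, G.Adj v u →
        ⟪f v + ε • z', f u⟫_ℝ ≤ -1 := by
      rw [eventually_all]
      intro u
      by_cases hu : G.Adj v u
      swap
      · filter_upwards with ε h using absurd h hu
      by_cases huS : u ∈ S
      · filter_upwards [self_mem_nhdsWithin] with ε h _
        have h : 0 < ε := h
        have h1 := hz'a u huS
        rw [inner_add_left, inner_smul_left, conj_trivial, ((hS u).1 huS).2.2]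
        nlinarith
      · have hlt : ⟪f v, f u⟫_ℝ < -1 := by
          by_cases hn : ‖f u‖ = R
          · exact lt_of_le_of_ne (hfF v u hu) fun h => huS ((hS u).2 ⟨hu, hn, h⟩)
          · exact hslack v u hu hn
        have hc : Tendsto (fun ε : ℝ => ⟪f v + ε • z', f u⟫_ℝ) (nhds 0)
          (nhds (⟪f v + (0 : ℝ) • z', f u⟫_ℝ)) := Continuous.tendsto (by fun_prop) 0
        rw [zero_smul, add_zero] at hc
        filter_upwards [nhdsWithin_le_nhds (hc.eventually (gt_mem_nhds hlt))] with ε h _ using h.le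
    obtain ⟨ε, ⟨h1, h2⟩, h3⟩ := ((e1.and e2).and self_mem_nhdsWithin).exists
    exact ⟨ε, h3, h1, h2⟩
  let f' : V → E := Function.update f v (f v + ε • z')
  have hf'F : f' ∈ Feas := by
    intro x y hxy
    by_cases hx : x = v
    · subst hx
      have hy : y ≠ x := hxy.ne'
      simp only [f', Function.update_self, Function.update_of_ne hy]
      exact hε2 y hxy
    · by_cases hy : y = v
      · subst hy
        simp only [f', Function.update_self, Function.update_of_ne hx]
        rw [real_inner_comm]
        exact hε2 x hxy.symm
      · simp only [f', Function.update_of_ne hx, Function.update_of_ne hy]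
        exact hfF x y hxy
  have hf'R : ∀ u, ‖f' u‖ ≤ R := by
    intro u
    by_cases hu : u = v
    · subst hu; simp only [f', Function.update_self]; exact hε1.le
    · simp only [f', Function.update_of_ne hu]; exact hfR u
  have hlt : cnt f' < cnt f := by
    apply Finset.card_lt_card
    rw [Finset.ssubset_iff_of_subset]
    · refine ⟨v, by simp [hv], ?_⟩
      simp only [f', Finset.mem_filter, Function.update_self, not_and]
      intro _; exact hε1.ne
    · intro u hu
      simp only [Finset.mem_filter, Finset.mem_univ, true_and] at hu ⊢
      by_cases huv : u = v
      · subst huv; exact hv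
      · simpa only [f', Function.update_of_ne huv] using hu
  exact absurd (hcnt f' hf'F hf'R) (not_le.2 hlt)

lemma bw_core {V : Type} [Fintype V] (G : SimpleGraph V)
    (hedge : ∃ x y : V, G.Adj x y) (d K : ℕ) (hK : 2 * K + 1 ≤ d) (hcol : G.Colorable (K + 2))
    (h : ∀ (m : ℕ) (T : SimpleGraph (Fin m)),
      (∀ v : Fin m, (T.neighborSet v).ncard ≤ d) →
      ∀ φ ψ : T →g G,
        Relation.ReflTransGen
          (fun f g : T →g G => ∃ x, f x ≠ g x ∧ ∀ y, y ≠ x → f y = g y) φ ψ) : False := by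
  classical
  obtain ⟨E, _, _, _, e, hE, he⟩ := bw_simplex K
  obtain ⟨col⟩ := hcol
  obtain ⟨f, R, hf, hfR, ⟨v0, hv0⟩, hR, hkkt⟩ := bw_kkt G hedge (fun v => e (col v))
    (fun x y hxy => (he _ _ (col.valid hxy)).le)
  let act : V → V → Prop := fun v u => ‖f v‖ = R ∧ G.Adj v u ∧ ‖f u‖ = R ∧ ⟪f v, f u⟫_ℝ = -1
  have hsymm : ∀ x y, act x y → act y x := fun x y ⟨h1, h2, h3, h4⟩ =>
    ⟨h3, h2.symm, h1, by rw [real_inner_comm]; exact h4⟩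
  have hex : ∀ v u, ∃ C : Fin K → V, act v u → (∀ i, act v (C i)) ∧
      ∀ x, ⟪f x, f u⟫_ℝ ≤ -1 → (∀ i, ⟪f x, f (C i)⟫_ℝ ≤ -1) → f x = f v := by
    intro v u
    by_cases hvu : act v u
    · obtain ⟨S, w, hS, hw, hsum⟩ := hkkt v hvu.1
      obtain ⟨C, hC1, hC2⟩ := bw_cara hE f (- f v) S
        (fun a ha => by rw [inner_neg_right, real_inner_comm, ((hS a).1 ha).2.2, neg_neg])
        w hw hsum u ((hS u).2 hvu.2)
      refine ⟨C, fun _ => ⟨fun i => ⟨hvu.1, (hS _).1 (hC1 i)⟩, fun x h1 h2 => ?_⟩⟩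
      have h3 := hC2 (f x) h1 h2
      rw [inner_neg_right, inner_neg_neg, real_inner_self_eq_norm_sq, hvu.1] at h3
      have h4 := norm_sub_sq_real (f x) (f v)
      rw [hvu.1] at h4
      have h5 : ‖f x‖ ^ 2 ≤ R ^ 2 := pow_le_pow_left₀ (norm_nonneg _) (hfR x) 2
      have h6 : ‖f x - f v‖ ^ 2 ≤ 0 := by linarith
      have h7 : ‖f x - f v‖ = 0 := by nlinarith [norm_nonneg (f x - f v), sq_nonneg ‖f x - f v‖]
      exact sub_eq_zero.1 (norm_eq_zero.1 h7)
    · exact ⟨fun _ => v, fun h => absurd h hvu⟩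
  choose C hC using hex
  obtain ⟨u0, hu0⟩ : ∃ u0, act v0 u0 := by
    obtain ⟨S, w, hS, hw, hsum⟩ := hkkt v0 hv0
    rcases S.eq_empty_or_nonempty with hSe | ⟨u, hu⟩
    · rw [hSe, Finset.sum_empty] at hsum
      have : f v0 = 0 := by simpa using hsum.symm
      rw [this, norm_zero] at hv0
      exact absurd hv0 hR.ne
    · exact ⟨u, hv0, (hS u).1 hu⟩
  obtain ⟨α, _, ⟨x0⟩, τ, adj, hadjs, hadj, hdeg, hpin⟩ :=
    bw_struct act hsymm C (fun v u hvu => (hC v u hvu).1) v0 u0 hu0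
  let eq := Finite.equivFin (α × Bool)
  let T : SimpleGraph (Fin (Nat.card (α × Bool))) :=
    { Adj := fun s t => (eq.symm s).2 ≠ (eq.symm t).2 ∧ adj (eq.symm s).1 (eq.symm t).1
      symm := ⟨fun s t hst => ⟨hst.1.symm, hadjs _ _ hst.2⟩⟩
      loopless := ⟨fun s hs => hs.1 rfl⟩ }
  have hTd : ∀ s, (T.neighborSet s).ncard ≤ d := by
    intro s
    refine le_trans ?_ ((hdeg (eq.symm s).1).trans hK)
    refine Set.ncard_le_ncard_of_injOn (fun t => (eq.symm t).1) (fun t ht => ht.2) ?_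
      (Set.toFinite _)
    intro t ht t2 ht2 htt
    apply eq.symm.injective
    refine Prod.ext htt ?_
    have h1 : (eq.symm s).2 ≠ (eq.symm t).2 := ht.1
    have h2 : (eq.symm s).2 ≠ (eq.symm t2).2 := ht2.1
    revert h1 h2
    cases (eq.symm s).2 <;> cases (eq.symm t).2 <;> cases (eq.symm t2).2 <;> simp
  let φ : T →g G := ⟨fun s => τ (eq.symm s).1, fun {s t} hst => (hadj _ _ hst.2).2.1⟩
  have hfrozen : ∀ ψ : T →g G, ∀ s, f (ψ s) = f (φ s) := by
    intro ψ
    have hr := h _ T hTd φ ψ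
    induction hr with
    | refl => intro s; rfl
    | @tail ψ1 ψ2 _ hstep ih =>
      obtain ⟨x, _, hx⟩ := hstep
      intro s
      by_cases hs : s = x
      swap
      · rw [← hx s hs]; exact ih s
      subst hs
      obtain ⟨u, hu, ⟨y, hy, hyu⟩, hyC⟩ := hpin (eq.symm s).1
      have key : ∀ y, adj (eq.symm s).1 y → ⟪f (ψ2 s), f (τ y)⟫_ℝ ≤ -1 := by
        intro y hy
        let t := eq (y, !(eq.symm s).2)
        have hst : T.Adj s t := by
          refine ⟨?_, ?_⟩
          · simp [t]
          · simpa [t] using hy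
        have h1 := hf _ _ (ψ2.map_adj hst)
        rw [← hx t hst.ne', ih t] at h1
        have h2 : φ t = τ y := by
          change τ (eq.symm t).1 = τ y
          simp [t]
        rwa [h2] at h1
      refine (hC _ u hu).2 (ψ2 s) ?_ ?_
      · rw [← hyu]; exact key y hy
      · intro i
        obtain ⟨y, hy, hyi⟩ := hyC i
        rw [← hyi]; exact key y hy
  obtain ⟨p, q, hpq⟩ := hedge
  let ψ1 : T →g G := ⟨fun s => if (eq.symm s).2 then p else q, fun {s t} hst => by
    have h1 : (eq.symm s).2 ≠ (eq.symm t).2 := hst.1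
    revert h1
    cases (eq.symm s).2 <;> cases (eq.symm t).2 <;> simp [hpq, hpq.symm]⟩
  let ψ2 : T →g G := ⟨fun s => if (eq.symm s).2 then q else p, fun {s t} hst => by
    have h1 : (eq.symm s).2 ≠ (eq.symm t).2 := hst.1
    revert h1
    cases (eq.symm s).2 <;> cases (eq.symm t).2 <;> simp [hpq, hpq.symm]⟩
  have h1 := hfrozen ψ1 (eq (x0, true))
  have h2 := hfrozen ψ2 (eq (x0, true))
  have e1 : ψ1 (eq (x0, true)) = p := by
    change (if (eq.symm (eq (x0, true))).2 then p else q) = p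
    simp
  have e2 : ψ2 (eq (x0, true)) = q := by
    change (if (eq.symm (eq (x0, true))).2 then q else p) = q
    simp
  rw [e1] at h1
  rw [e2] at h2
  have h3 := hf p q hpq
  rw [h1, h2, real_inner_self_eq_norm_sq] at h3
  nlinarith [sq_nonneg ‖f (φ (eq (x0, true)))‖]

/-- **Brightwell–Winkler**: let `G` be a finite simple graph with at least one edge
and `d ≥ 1`. If for every finite simple graph `T` with maximum degree at most `d` the
set of graph homomorphisms `T → G` is empty or connected under single-vertex changes
(any two homomorphisms are joined by a finite chain of homomorphisms in which
consecutive ones differ at exactly one vertex), then `2·χ(G) ≥ d + 4`. -/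
theorem brightwell_winkler {V : Type} [Fintype V] (G : SimpleGraph V)
    (hedge : ∃ x y : V, G.Adj x y) (d : ℕ) (hd : 1 ≤ d)
    (h : ∀ (m : ℕ) (T : SimpleGraph (Fin m)),
      (∀ v : Fin m, (T.neighborSet v).ncard ≤ d) →
      ∀ φ ψ : T →g G,
        Relation.ReflTransGen
          (fun f g : T →g G => ∃ x, f x ≠ g x ∧ ∀ y, y ≠ x → f y = g y) φ ψ) :
    (d + 4 : ℕ∞) ≤ 2 * G.chromaticNumber := by
  obtain ⟨x, y, hxy⟩ := hedge
  have hcol := G.colorable_chromaticNumber_of_fintype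
  have hne : G.chromaticNumber ≠ ⊤ :=
    SimpleGraph.chromaticNumber_ne_top_iff_exists.2 ⟨_, hcol⟩
  have h2 := SimpleGraph.two_le_chromaticNumber_of_adj hxy
  lift G.chromaticNumber to ℕ using hne with n
  have h2 : 2 ≤ n := by exact_mod_cast h2
  rw [ENat.toNat_coe] at hcol
  obtain ⟨K, rfl⟩ := Nat.exists_eq_add_of_le' h2
  by_contra hlt
  have hlt : ¬ d + 4 ≤ 2 * (K + 2) := by
    intro hle
    exact hlt (by exact_mod_cast hle)
  exact bw_core G ⟨x, y, hxy⟩ d K (by omega) hcol h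
end

section
/- Let G be a finite simple graph and n an integer such that the maximum degree of G is at most n − 2. Then the set of proper colorings c : V(G) → {1,…,n} is nonempty, and any two proper colorings are connected by a finite sequence of proper colorings in which consecutive colorings differ at exactly one vertex. (Equivalently, the Hom complex Hom(G, K_n) is 0-connected.) -/
namespace ColConn

def Pr {V : Type} (G : SimpleGraph V) {n : ℕ} (S : Finset V) (f : V → Fin n) : Prop :=
  ∀ x ∈ S, ∀ y ∈ S, G.Adj x y → f x ≠ f y

def Step {V : Type} (G : SimpleGraph V) {n : ℕ} (S : Finset V) (f g : V → Fin n) : Prop :=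
  Pr G S f ∧ Pr G S g ∧ ∃ x, ∀ y, y ≠ x → f y = g y

theorem exists_free {V : Type} [Fintype V] (G : SimpleGraph V) {n : ℕ}
    (hdeg : ∀ v : V, (G.neighborSet v).ncard + 2 ≤ n) (f : V → Fin n) (v : V) (b : Fin n) :
    ∃ k : Fin n, k ≠ b ∧ ∀ u, G.Adj v u → f u ≠ k := by
  by_contra! h
  have h1 : (Set.univ : Set (Fin n)) ⊆ insert b (f '' G.neighborSet v) := by
    intro k _
    by_cases hk : k = b
    · exact Or.inl hk
    · obtain ⟨u, hu, e⟩ := h k hk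
      exact Or.inr ⟨u, hu, e⟩
  have h2 := Set.ncard_le_ncard h1 (Set.toFinite _)
  have h3 := Set.ncard_insert_le b (f '' G.neighborSet v)
  have h4 := Set.ncard_image_le (f := f) (Set.toFinite (G.neighborSet v))
  rw [Set.ncard_univ, Nat.card_fin] at h2
  have := hdeg v
  omega

theorem pr_update {V : Type} [DecidableEq V] (G : SimpleGraph V) {n : ℕ} {S : Finset V}
    {f : V → Fin n} {v : V} {k : Fin n} (hf : ∀ x ∈ S, ∀ y ∈ S, x ≠ v → y ≠ v → G.Adj x y → f x ≠ f y)
    (hk : ∀ u ∈ S, G.Adj v u → f u ≠ k) : Pr G S (Function.update f v k) := by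
  intro x hx y hy hxy
  have hne := hxy.ne
  by_cases h1 : x = v
  · subst h1
    rw [Function.update_self, Function.update_of_ne hne.symm]
    exact (hk y hy hxy).symm
  · by_cases h2 : y = v
    · subst h2
      rw [Function.update_self, Function.update_of_ne hne]
      exact hk x hx hxy.symm
    · rw [Function.update_of_ne h1, Function.update_of_ne h2]
      exact hf x hx y hy h1 h2 hxy

theorem lift {V : Type} [Fintype V] [DecidableEq V] (G : SimpleGraph V) {n : ℕ}
    (hdeg : ∀ v : V, (G.neighborSet v).ncard + 2 ≤ n) (S : Finset V) (v : V) (hv : v ∉ S)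
    (f h : V → Fin n) (hf : Pr G (insert v S) f) (hr : Relation.ReflTransGen (Step G S) f h) :
    ∃ h', Relation.ReflTransGen (Step G (insert v S)) f h' ∧ Pr G (insert v S) h' ∧
      ∀ x ∈ S, h' x = h x := by
  induction hr with
  | refl => exact ⟨f, .refl, hf, fun _ _ => rfl⟩
  | @tail a b _ hab ih =>
    obtain ⟨a', hr', ha', hag⟩ := ih
    obtain ⟨-, hb, x, hx⟩ := hab
    by_cases hxS : x ∈ S
    · have hxv : x ≠ v := fun e => hv (e ▸ hxS)
      obtain ⟨k, hkb, hk⟩ := exists_free G hdeg a' v (b x)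
      have p1 : Pr G (insert v S) (Function.update a' v k) :=
        pr_update G (fun x hx y hy _ _ h => ha' x hx y hy h) (fun u _ h => hk u h)
      have p2 : Pr G (insert v S) (Function.update (Function.update a' v k) x (b x)) := by
        refine pr_update G (fun x hx y hy _ _ h => p1 x hx y hy h) ?_
        intro u hu hxu
        by_cases huv : u = v
        · subst huv
          rw [Function.update_self]; exact hkb
        · have huS : u ∈ S := (Finset.mem_insert.1 hu).resolve_left huv
          rw [Function.update_of_ne huv, hag u huS, hx u hxu.ne.symm]
          exact (hb x hxS u huS hxu).symm
      refine ⟨_, (hr'.tail ⟨ha', p1, v, ?_⟩).tail ⟨p1, p2, x, ?_⟩, p2, ?_⟩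
      · intro y hy; rw [Function.update_of_ne hy]
      · intro y hy; rw [Function.update_of_ne hy]
      · intro y hy
        by_cases hyx : y = x
        · subst hyx; rw [Function.update_self]
        · have hyv : y ≠ v := fun e => hv (e ▸ hy)
          rw [Function.update_of_ne hyx, Function.update_of_ne hyv, hag y hy, hx y hyx]
    · refine ⟨a', hr', ha', fun y hy => ?_⟩
      rw [hag y hy, hx y (fun e => hxS (e ▸ hy))]

theorem conn {V : Type} [Fintype V] [DecidableEq V] (G : SimpleGraph V) {n : ℕ}
    (hdeg : ∀ v : V, (G.neighborSet v).ncard + 2 ≤ n) (S : Finset V) :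
    ∀ f g : V → Fin n, Pr G S f → Pr G S g →
      ∃ h, Relation.ReflTransGen (Step G S) f h ∧ ∀ x ∈ S, h x = g x := by
  induction S using Finset.induction_on with
  | empty => intro f g _ _; exact ⟨f, .refl, by simp⟩
  | insert v S hv ih =>
    intro f g hf hg
    have sub : ∀ c : V → Fin n, Pr G (insert v S) c → Pr G S c := fun c hc x hx y hy =>
      hc x (Finset.mem_insert_of_mem hx) y (Finset.mem_insert_of_mem hy)
    obtain ⟨h, hr, hh⟩ := ih f g (sub f hf) (sub g hg)
    obtain ⟨h', hr', hp, he⟩ := lift G hdeg S v hv f h hf hr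
    have key : ∀ x ∈ insert v S, Function.update h' v (g v) x = g x := by
      intro x hx
      by_cases hxv : x = v
      · subst hxv; rw [Function.update_self]
      · have hxS := (Finset.mem_insert.1 hx).resolve_left hxv
        rw [Function.update_of_ne hxv, he x hxS, hh x hxS]
    refine ⟨_, hr'.tail ⟨hp, ?_, v, ?_⟩, key⟩
    · intro x hx y hy hxy
      rw [key x hx, key y hy]; exact hg x hx y hy hxy
    · intro y hy; rw [Function.update_of_ne hy]

theorem exist {V : Type} [Fintype V] [DecidableEq V] (G : SimpleGraph V) {n : ℕ}
    (hdeg : ∀ v : V, (G.neighborSet v).ncard + 2 ≤ n) (S : Finset V) :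
    ∃ f : V → Fin n, Pr G S f := by
  induction S using Finset.induction_on with
  | empty => exact ⟨fun v => ⟨0, by have := hdeg v; omega⟩, by intro x hx; simp at hx⟩
  | insert v S hv ih =>
    obtain ⟨f, hf⟩ := ih
    obtain ⟨k, -, hk⟩ := exists_free G hdeg f v (f v)
    refine ⟨Function.update f v k, pr_update G ?_ (fun u _ h => hk u h)⟩
    intro x hx y hy hxv hyv
    exact hf x ((Finset.mem_insert.1 hx).resolve_left hxv) y
      ((Finset.mem_insert.1 hy).resolve_left hyv)

end ColConn

/-- **Babson–Kozlov / Čukić–Kozlov (case k = 0)**: if the maximum degree of a finite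
simple graph `G` is at most `n - 2`, then proper `n`-colorings of `G` exist and any
two are joined by a finite chain of proper colorings in which consecutive colorings
differ at exactly one vertex; i.e. `Hom(G, K_n)` is `0`-connected. -/
theorem colorings_connected {V : Type} [Fintype V] (G : SimpleGraph V) (n : ℕ)
    (hdeg : ∀ v : V, (G.neighborSet v).ncard + 2 ≤ n) :
    (∃ c : V → Fin n, ∀ x y, G.Adj x y → c x ≠ c y) ∧
    ∀ c₁ c₂ : V → Fin n,
      (∀ x y, G.Adj x y → c₁ x ≠ c₁ y) → (∀ x y, G.Adj x y → c₂ x ≠ c₂ y) →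
      Relation.ReflTransGen
        (fun f g : V → Fin n =>
          (∀ x y, G.Adj x y → f x ≠ f y) ∧ (∀ x y, G.Adj x y → g x ≠ g y) ∧
          ∃ x, f x ≠ g x ∧ ∀ y, y ≠ x → f y = g y) c₁ c₂ := by
  classical
  refine ⟨?_, fun c₁ c₂ h₁ h₂ => ?_⟩
  · obtain ⟨f, hf⟩ := ColConn.exist G hdeg Finset.univ
    exact ⟨f, fun x y => hf x (Finset.mem_univ x) y (Finset.mem_univ y)⟩
  · obtain ⟨h, hr, hh⟩ := ColConn.conn G hdeg Finset.univ c₁ c₂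
      (fun x _ y _ => h₁ x y) (fun x _ y _ => h₂ x y)
    obtain rfl : h = c₂ := funext fun x => hh x (Finset.mem_univ x)
    clear hh h₂
    induction hr with
    | refl => exact .refl
    | @tail a b _ hab ih =>
      obtain ⟨ha, hb, x, hx⟩ := hab
      by_cases e : a x = b x
      · have : a = b := funext fun y => by
          by_cases hy : y = x
          · rw [hy, e]
          · exact hx y hy
        rw [← this]; exact ih
      · exact ih.tail ⟨fun x y => ha x (Finset.mem_univ x) y (Finset.mem_univ y),
          fun x y => hb x (Finset.mem_univ x) y (Finset.mem_univ y), x, e, hx⟩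
end
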